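/- arXiv:2403.19388 — 2 statements merged into one kernel-verified Lean document; each statement's English description precedes it below -/
import Mathlib

section
/- Let G be a finite group, A, B ⊆ G∖{1} symmetric generating sets (A = A^{−1}, B = B^{−1}) with gag^{−1} ≠ b for all a ∈ A, b ∈ B, g ∈ G, let 𝔽 be a finite field, let C_A ⊆ 𝔽^A and C_B ⊆ 𝔽^B be linear codes, set Σ = C_A⊗C_B, and let Z^0 ⊆ Σ^G be the code of ensembles (m_g)_{g∈G} satisfying r_a(m_g) = r_{a^{−1}}(m_{ag}) and c_b(m_g) = c_{b^{−1}}(m_{gb}) for all g ∈ G, a ∈ A, b ∈ B. Let ε ∈ (0,1] and assume: (1a) δ(C_A) ≥ ε; (1b) δ(C_B) ≥ ε; (1c) C_A⊗C_B is ε-agreement testable; (2) the Cayley graphs Cay(A,G) and Cay(G,B), with their natural weight functions, are (ε²/2500)-expanders. Then: (i) every nonzero m ∈ Z^0 satisfies #{g ∈ G : m_g ≠ 0}/|G| ≥ 0.9996·ε (so δ(Z^0) ≥ 0.9996·ε); (ii) dim_𝔽 Z^0 ≥ |G|·(dim_𝔽 C_A · dim_𝔽 C_B − (3/4)|A||B|),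 equivalently r(Z^0) ≥ (4·r(C_A)·r(C_B) − 3)/(4·r(C_A)·r(C_B)); (iii) for every f ∈ Σ^G, the number V(f) of edges of Cay(A,G,B) whose constraint f violates (edges {g,ag} with r_a(f(g)) ≠ r_{a^{−1}}(f(ag)), and edges {g,gb} with c_b(f(g)) ≠ c_{b^{−1}}(f(gb))) satisfies V(f)/(|G|·(|A|+|B|)/2) ≥ μ·dist(f, Z^0), where μ = 1/( max{|A|/|B|, |B|/|A|}·(250000·ε^{−3} + 4800·max{|A|,|B|}·ε^{−1}) ). -/
/-!
For the distance, a nonzero entry in the row `a` of `m g` also occurs in `m (a * g)`. Since a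
nonzero column of `m g` has at least `ε|A|` nonzero entries, every vertex of the support of a
codeword `m` has an `ε`-fraction of its `A`-neighbours in the support, which forces the support of
`m` to be large in an expander.

For the rate, the coordinates `(g, a, b)` are identified in orbits of size at most `4` under the two
commuting involutions `(g, a, b) ↦ (ag, a⁻¹, b)` and `(g, a, b) ↦ (gb, a, b⁻¹)`. The arrays constant
on these orbits thus form a space of dimension at least a quarter of the full one, and `Z⁰` is its
intersection with the words over the tensor code.

For the soundness, let `F` minimize the violation energy plus `min(|A|, |B|)` times the Hamming
distance to `f`. If `F` has energy zero, it is a codeword, and its distance to `f` is bounded by the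
energy of `f`. Otherwise, no change of `F` at a single vertex lowers the energy by more than
`min(|A|, |B|)`, so agreement testability around each vertex `g` bounds the local energy at `g` by
the energy carried by the `A`-edges at the `B`-neighbours of `g` and by the `B`-edges at its
`A`-neighbours. Expansion turns this local domination into a lower bound for the total energy that
is linear in `|G|`. Then `f` violates so many edges that even its distance to `0` is small enough.
-/

open scoped Classical

noncomputable section

namespace FK6

variable {𝔽 : Type*} [Field 𝔽]

/-- The tensor code `C_A ⊗ C_B`, viewed as the space of matrices all of whose rows lie
in `C_B` and all of whose columns lie in `C_A`. -/
def tensorCode {A B : Type*} (CA : Submodule 𝔽 (A → 𝔽)) (CB : Submodule 𝔽 (B → 𝔽)) :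
    Submodule 𝔽 (A → B → 𝔽) where
  carrier := {m | (∀ a : A, m a ∈ CB) ∧ ∀ b : B, (fun a => m a b) ∈ CA}
  add_mem' := by
    intro m₁ m₂ h₁ h₂
    exact ⟨fun a => CB.add_mem (h₁.1 a) (h₂.1 a), fun b => CA.add_mem (h₁.2 b) (h₂.2 b)⟩
  zero_mem' := ⟨fun a => CB.zero_mem, fun b => CA.zero_mem⟩
  smul_mem' := by
    intro c m hm
    exact ⟨fun a => CB.smul_mem c (hm.1 a), fun b => CA.smul_mem c (hm.2 b)⟩

/-- `κ`-agreement testability of the tensor code `C_A ⊗ C_B`. -/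
def AgreementTestable {A B : Type*} [Fintype A] [Fintype B]
    (CA : Submodule 𝔽 (A → 𝔽)) (CB : Submodule 𝔽 (B → 𝔽)) (κ : ℝ) : Prop :=
  ∀ m₁ m₂ : A → B → 𝔽,
    (∀ b : B, (fun a => m₁ a b) ∈ CA) → (∀ a : A, m₂ a ∈ CB) →
    ∃ m ∈ tensorCode CA CB,
      κ * (((Finset.univ.filter fun a : A => m₂ a ≠ m a).card : ℝ) /
            (2 * (Fintype.card A : ℝ)) +
          ((Finset.univ.filter fun b : B => (fun a => m₁ a b) ≠ fun a => m a b).card : ℝ) /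
            (2 * (Fintype.card B : ℝ)))
        ≤ ((Finset.univ.filter fun p : A × B => m₁ p.1 p.2 ≠ m₂ p.1 p.2).card : ℝ) /
            ((Fintype.card A : ℝ) * (Fintype.card B : ℝ))

variable {G : Type*} [Group G] [Fintype G] [DecidableEq G]

/-- The `0`-cocycle code `Z⁰(X, 𝓕)` of the sheaf `𝓕` on the double Cayley complex
`Cay(A, G, B)`: ensembles of tensor codewords satisfying
`r_a(m_g) = r_{a⁻¹}(m_{ag})` and `c_b(m_g) = c_{b⁻¹}(m_{gb})`. -/
def Z0 (A B : Finset G) (CA : Submodule 𝔽 (↥A → 𝔽)) (CB : Submodule 𝔽 (↥B → 𝔽))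
    (hA : ∀ a ∈ A, a⁻¹ ∈ A) (hB : ∀ b ∈ B, b⁻¹ ∈ B) :
    Submodule 𝔽 (G → ↥A → ↥B → 𝔽) where
  carrier := {m | (∀ g : G, m g ∈ tensorCode CA CB) ∧
    ∀ (g : G) (a : ↥A) (b : ↥B),
      m g a b = m ((a : G) * g) ⟨(a : G)⁻¹, hA _ a.2⟩ b ∧
      m g a b = m (g * (b : G)) a ⟨(b : G)⁻¹, hB _ b.2⟩}
  add_mem' := by
    intro m₁ m₂ h₁ h₂
    refine ⟨fun g => (tensorCode CA CB).add_mem (h₁.1 g) (h₂.1 g), fun g a b => ?_⟩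
    constructor
    · simp only [Pi.add_apply]
      rw [(h₁.2 g a b).1, (h₂.2 g a b).1]
    · simp only [Pi.add_apply]
      rw [(h₁.2 g a b).2, (h₂.2 g a b).2]
  zero_mem' := ⟨fun _ => Submodule.zero_mem _, fun _ _ _ => ⟨rfl, rfl⟩⟩
  smul_mem' := by
    intro c m hm
    refine ⟨fun g => (tensorCode CA CB).smul_mem c (hm.1 g), fun g a b => ?_⟩
    constructor
    · simp only [Pi.smul_apply]
      rw [(hm.2 g a b).1]
    · simp only [Pi.smul_apply]
      rw [(hm.2 g a b).2]

/-- The set of edges of the double Cayley complex `Cay(A, G, B)` whose constraint is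
violated by the word `f`. -/
def violatedEdges (A B : Finset G) (hA : ∀ a ∈ A, a⁻¹ ∈ A) (hB : ∀ b ∈ B, b⁻¹ ∈ B)
    (f : G → ↥A → ↥B → 𝔽) : Finset (Finset G) :=
  Finset.univ.filter fun e =>
    (∃ (g : G) (a : ↥A), e = {g, (a : G) * g} ∧
        f g a ≠ f ((a : G) * g) ⟨(a : G)⁻¹, hA _ a.2⟩) ∨
    ∃ (g : G) (b : ↥B), e = {g, g * (b : G)} ∧
        (fun a => f g a b) ≠ fun a => f (g * (b : G)) a ⟨(b : G)⁻¹, hB _ b.2⟩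

/-- The left Cayley graph `Cay(A, G)`, with its natural weight function, is a
`λ`-expander: every eigenvalue of its weighted adjacency operator on the space of
mean-zero functions is at most `λ`. -/
def IsLeftCayleyExpander (A : Finset G) (lam : ℝ) : Prop :=
  ∀ (μ : ℝ) (f : G → ℝ), f ≠ 0 → (∑ g : G, f g) = 0 →
    (∀ g : G, (∑ a ∈ A, f (a * g)) / (A.card : ℝ) = μ * f g) → μ ≤ lam

/-- The right Cayley graph `Cay(G, B)`, with its natural weight function, is a
`λ`-expander. -/
def IsRightCayleyExpander (B : Finset G) (lam : ℝ) : Prop :=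
  ∀ (μ : ℝ) (f : G → ℝ), f ≠ 0 → (∑ g : G, f g) = 0 →
    (∀ g : G, (∑ b ∈ B, f (g * b)) / (B.card : ℝ) = μ * f g) → μ ≤ lam

end FK6

namespace FK6

theorem card_filter_snd_mem {V I : Type*} [Fintype V] [Fintype I] (R : V → Finset I) :
    (Finset.univ.filter fun p : V × I => p.2 ∈ R p.1).card = ∑ v, (R v).card := by
  rw [← Finset.card_sigma]
  exact Finset.card_equiv (Equiv.sigmaEquivProd V I).symm (by simp)

theorem card_filter_fst_mem {V I : Type*} [Fintype V] [Fintype I] (R : V → Finset I) :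
    (Finset.univ.filter fun p : I × V => p.1 ∈ R p.2).card = ∑ v, (R v).card := by
  rw [← card_filter_snd_mem]
  exact Finset.card_equiv (Equiv.prodComm I V) (by simp)

section Spectral

variable {V : Type*} [Fintype V]

theorem posSemidef_of_forall_eigenvalue_nonneg {M : Matrix V V ℝ} (hM : M.IsHermitian)
    (h : ∀ (μ : ℝ) (v : V → ℝ), v ≠ 0 → M.mulVec v = μ • v → 0 ≤ μ) : M.PosSemidef := by
  rw [hM.posSemidef_iff_eigenvalues_nonneg]
  intro i
  refine h _ (hM.eigenvectorBasis i).ofLp ?_ (hM.mulVec_eigenvectorBasis i)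
  exact fun h0 => hM.eigenvectorBasis.orthonormal.ne_zero i (WithLp.ofLp_injective 2 h0)

theorem sum_eq_zero_of_mulVec_eq_smul {M : Matrix V V ℝ} (hM : M.IsHermitian)
    (hM1 : M.mulVec 1 = 0) {μ : ℝ} (hμ : μ ≠ 0) {v : V → ℝ} (hv : M.mulVec v = μ • v) :
    ∑ x, v x = 0 := by
  have h : μ * ∑ x, v x = 0 := by
    calc μ * ∑ x, v x = (1 : V → ℝ) ⬝ᵥ M.mulVec v := by
          rw [hv, dotProduct_smul, one_dotProduct, smul_eq_mul]
      _ = M.mulVec 1 ⬝ᵥ v := by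
          rw [Matrix.dotProduct_mulVec, ← Matrix.mulVec_transpose,
            ← Matrix.conjTranspose_eq_transpose_of_trivial, hM.eq]
      _ = 0 := by rw [hM1, zero_dotProduct]
  exact (mul_eq_zero.1 h).resolve_left hμ

variable (V) in
/-- The averaging operator, that is, the orthogonal projection onto the constant functions. -/
def averaging : Matrix V V ℝ :=
  Matrix.of fun _ _ => (Fintype.card V : ℝ)⁻¹

theorem averaging_mulVec (v : V → ℝ) :
    (averaging V).mulVec v = fun _ => (∑ x, v x) / Fintype.card V := by
  ext x
  simp only [averaging, Matrix.mulVec, dotProduct, Matrix.of_apply, ← Finset.mul_sum]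
  ring

theorem isHermitian_averaging : (averaging V).IsHermitian := by
  ext
  simp [averaging]

theorem posSemidef_of_meanZero_eigenvalue_le [Nonempty V] {M : Matrix V V ℝ}
    (hM : M.IsHermitian) (hM1 : M.mulVec 1 = 1) {lam : ℝ}
    (h : ∀ (μ : ℝ) (f : V → ℝ), f ≠ 0 → ∑ x, f x = 0 → M.mulVec f = μ • f → μ ≤ lam) :
    (lam • (1 - averaging V) - (M - averaging V)).PosSemidef := by
  set S := lam • (1 - averaging V) - (M - averaging V) with hS
  have hSv (v : V → ℝ) : S.mulVec v =
      lam • (v - (averaging V).mulVec v) - (M.mulVec v - (averaging V).mulVec v) := by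
    simp only [hS, Matrix.sub_mulVec, Matrix.smul_mulVec, Matrix.one_mulVec]
  have hSherm : S.IsHermitian :=
    ((Matrix.isHermitian_one.sub isHermitian_averaging).smul (IsSelfAdjoint.all lam)).sub
      (hM.sub isHermitian_averaging)
  have hS1 : S.mulVec 1 = 0 := by
    have hJ1 : (averaging V).mulVec 1 = 1 := by ext x; simp [averaging_mulVec]
    rw [hSv, hM1, hJ1, sub_self, smul_zero, sub_zero]
  -- `S` kills the constants, so the eigenvectors of its other eigenvalues have mean zero, and on
  -- these `S` is `lam - M`.
  refine posSemidef_of_forall_eigenvalue_nonneg hSherm fun μ v hv0 hv => ?_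
  by_contra! hμ
  have hsum : ∑ x, v x = 0 := sum_eq_zero_of_mulVec_eq_smul hSherm hS1 hμ.ne hv
  have hJ0 : (averaging V).mulVec v = 0 := by ext x; simp [averaging_mulVec, hsum]
  have hMv : M.mulVec v = (lam - μ) • v := by
    rw [hSv, hJ0, sub_zero, sub_zero] at hv
    rw [sub_smul, ← hv, sub_sub_cancel]
  linarith [h _ v hv0 hsum hMv]

theorem dotProduct_mulVec_le_of_meanZero_eigenvalue_le [Nonempty V] {M : Matrix V V ℝ}
    (hM : M.IsHermitian) (hM1 : M.mulVec 1 = 1) {lam : ℝ}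
    (h : ∀ (μ : ℝ) (f : V → ℝ), f ≠ 0 → ∑ x, f x = 0 → M.mulVec f = μ • f → μ ≤ lam)
    (u : V → ℝ) :
    u ⬝ᵥ M.mulVec u ≤ lam * ∑ x, u x ^ 2 + (1 - lam) * (∑ x, u x) ^ 2 / Fintype.card V := by
  have hnonneg := (posSemidef_of_meanZero_eigenvalue_le hM hM1 h).dotProduct_mulVec_nonneg u
  have huJ : u ⬝ᵥ (averaging V).mulVec u = (∑ x, u x) ^ 2 / Fintype.card V := by
    rw [averaging_mulVec, dotProduct, ← Finset.sum_mul]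
    ring
  have huu : u ⬝ᵥ u = ∑ x, u x ^ 2 := by simp only [dotProduct, sq]
  rw [star_trivial, Matrix.sub_mulVec, Matrix.smul_mulVec, Matrix.sub_mulVec, Matrix.sub_mulVec,
    Matrix.one_mulVec, dotProduct_sub, dotProduct_smul, dotProduct_sub, dotProduct_sub, huJ, huu,
    smul_eq_mul] at hnonneg
  rw [mul_div_assoc]
  linarith

theorem mul_sum_le_sum_sq {w : V → ℝ} (hw : 0 ≤ w) {θ : ℝ} (hθ : ∀ v, w v ≠ 0 → θ ≤ w v) :
    θ * ∑ v, w v ≤ ∑ v, w v ^ 2 := by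
  rw [Finset.mul_sum]
  refine Finset.sum_le_sum fun v _ => ?_
  rcases eq_or_ne (w v) 0 with h | h
  · simp [h]
  · rw [sq]
    exact mul_le_mul_of_nonneg_right (hθ v h) (hw v)

end Spectral

/-- A regular graph on `V` whose edges at every vertex are labelled by `I`: the edge with label `i`
at `v` leads to `step i v`, where it carries the label `inv i`. Cayley graphs are the example. -/
structure LabelledGraph (V I : Type*) where
  step : I → Equiv.Perm V
  inv : I → I
  inv_inv : ∀ i, inv (inv i) = i
  step_inv : ∀ i, step (inv i) = (step i)⁻¹

namespace LabelledGraph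

variable {V I J : Type*}

section Expansion

variable [Fintype I] [Fintype J] (X : LabelledGraph V I) (Y : LabelledGraph V J)

/-- The transition matrix of the simple random walk, that is, the normalized adjacency operator;
it is `0` if there are no labels. -/
def walkMatrix : Matrix V V ℝ :=
  (Fintype.card I : ℝ)⁻¹ • ∑ i, (X.step i).permMatrix ℝ

theorem isHermitian_walkMatrix : X.walkMatrix.IsHermitian := by
  have hsum : (∑ i, (X.step i).permMatrix ℝ).IsHermitian := by
    rw [Matrix.IsHermitian, Matrix.conjTranspose_sum]
    simp only [Matrix.conjTranspose_permMatrix, ← X.step_inv]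
    exact Equiv.sum_comp (Function.Involutive.toPerm X.inv X.inv_inv)
      fun i => (X.step i).permMatrix ℝ
  exact hsum.smul (IsSelfAdjoint.all _)

variable [Fintype V]

theorem walkMatrix_mulVec_apply (u : V → ℝ) (v : V) :
    X.walkMatrix.mulVec u v = (∑ i, u (X.step i v)) / Fintype.card I := by
  simp [walkMatrix, Matrix.smul_mulVec, Matrix.sum_mulVec, Matrix.permMatrix_mulVec,
    div_eq_inv_mul]

theorem walkMatrix_mulVec_one [Nonempty I] : X.walkMatrix.mulVec 1 = 1 := by
  ext v
  simp [walkMatrix_mulVec_apply]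

theorem walkMatrix_mulVec_mono {u w : V → ℝ} (h : u ≤ w) :
    X.walkMatrix.mulVec u ≤ X.walkMatrix.mulVec w := by
  intro v
  simp only [walkMatrix_mulVec_apply]
  gcongr
  exact h _

/-- `λ`-expansion: the normalized adjacency operator has no eigenvalue above `λ` on the space of
mean-zero functions. -/
def IsExpander (lam : ℝ) : Prop :=
  ∀ (μ : ℝ) (f : V → ℝ), f ≠ 0 → ∑ v, f v = 0 → X.walkMatrix.mulVec f = μ • f → μ ≤ lam

variable {X Y} {lam : ℝ}

theorem IsExpander.dotProduct_mulVec_le [Nonempty V] [Nonempty I] (hX : X.IsExpander lam)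
    (u : V → ℝ) :
    u ⬝ᵥ X.walkMatrix.mulVec u ≤
      lam * ∑ v, u v ^ 2 + (1 - lam) * (∑ v, u v) ^ 2 / Fintype.card V :=
  dotProduct_mulVec_le_of_meanZero_eigenvalue_le X.isHermitian_walkMatrix X.walkMatrix_mulVec_one
    hX u

theorem IsExpander.mul_card_le_mul_card_of_internal_degree [Nonempty I] (hX : X.IsExpander lam)
    {U : Finset V} (hU : U.Nonempty) {ε : ℝ}
    (hdeg : ∀ v ∈ U, ε ≤ (Finset.univ.filter fun i => X.step i v ∈ U).card / Fintype.card I) :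
    (ε - lam) * Fintype.card V ≤ (1 - lam) * U.card := by
  have : Nonempty V := hU.to_subtype.map Subtype.val
  have hn : (0 : ℝ) < Fintype.card V := by exact_mod_cast Fintype.card_pos
  have hU0 : (0 : ℝ) < U.card := by exact_mod_cast hU.card_pos
  set u : V → ℝ := fun v => if v ∈ U then 1 else 0 with hu
  have hsum : ∑ v, u v = U.card := by simp [hu]
  have hsq : ∑ v, u v ^ 2 = U.card := by simp [hu]
  have hlow : ε * U.card ≤ u ⬝ᵥ X.walkMatrix.mulVec u := by
    calc ε * U.card = ∑ _ ∈ U, ε := by simp [mul_comm]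
      _ ≤ ∑ v ∈ U, X.walkMatrix.mulVec u v := by
          refine Finset.sum_le_sum fun v hv => (hdeg v hv).trans_eq ?_
          simp [walkMatrix_mulVec_apply, hu]
      _ = u ⬝ᵥ X.walkMatrix.mulVec u := by simp [dotProduct, hu]
  have hup := hX.dotProduct_mulVec_le u
  rw [hsum, hsq] at hup
  have h : (ε - lam) * U.card ≤ (1 - lam) * U.card / Fintype.card V * U.card := by
    have : (1 - lam) * (U.card : ℝ) ^ 2 / Fintype.card V =
        (1 - lam) * U.card / Fintype.card V * U.card := by ring
    linarith
  exact (le_div_iff₀ hn).1 (le_of_mul_le_mul_right h hU0)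

theorem mul_sum_sq_le_of_le_walkMatrix_mulVec [Nonempty V] [Nonempty I] [Nonempty J]
    (hX : X.IsExpander lam) (hY : Y.IsExpander lam) (hlam : 0 ≤ lam) {κ : ℝ} {x y w : V → ℝ}
    (hw : 0 ≤ w) (hxw : x ≤ w) (hyw : y ≤ w)
    (hloc : ∀ v, κ * w v ≤ Y.walkMatrix.mulVec x v + X.walkMatrix.mulVec y v) :
    (κ - 2 * lam) * ∑ v, w v ^ 2 ≤ 2 * (∑ v, w v) ^ 2 / Fintype.card V := by
  have hdrop : (1 - lam) * (∑ v, w v) ^ 2 / Fintype.card V ≤ (∑ v, w v) ^ 2 / Fintype.card V := by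
    gcongr
    exact mul_le_of_le_one_left (sq_nonneg _) (sub_le_self _ hlam)
  have hlow : κ * ∑ v, w v ^ 2 ≤ w ⬝ᵥ Y.walkMatrix.mulVec w + w ⬝ᵥ X.walkMatrix.mulVec w := by
    simp only [dotProduct, Finset.mul_sum, ← Finset.sum_add_distrib]
    refine Finset.sum_le_sum fun v _ => ?_
    calc κ * w v ^ 2 = w v * (κ * w v) := by ring
      _ ≤ w v * (Y.walkMatrix.mulVec w v + X.walkMatrix.mulVec w v) :=
          mul_le_mul_of_nonneg_left ((hloc v).trans (add_le_add
            (Y.walkMatrix_mulVec_mono hxw v) (X.walkMatrix_mulVec_mono hyw v))) (hw v)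
      _ = _ := mul_add ..
  have hup : 2 * (∑ v, w v) ^ 2 / (Fintype.card V : ℝ) =
      (∑ v, w v) ^ 2 / Fintype.card V + (∑ v, w v) ^ 2 / Fintype.card V := by ring
  linarith [hX.dotProduct_mulVec_le w, hY.dotProduct_mulVec_le w]

theorem mul_card_le_sum_of_le_walkMatrix_mulVec [Nonempty V] [Nonempty I] [Nonempty J]
    (hX : X.IsExpander lam) (hY : Y.IsExpander lam) (hlam : 0 ≤ lam) {κ θ : ℝ}
    (hκ : 2 * lam ≤ κ) {x y : V → ℝ} (hx : 0 ≤ x) (hy : 0 ≤ y)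
    (hθ : ∀ v, x v + y v ≠ 0 → θ ≤ x v + y v)
    (hloc : ∀ v, κ * (x v + y v) ≤ Y.walkMatrix.mulVec x v + X.walkMatrix.mulVec y v)
    (hpos : 0 < ∑ v, (x v + y v)) :
    (κ - 2 * lam) * θ * Fintype.card V ≤ 2 * ∑ v, (x v + y v) := by
  have hn : (0 : ℝ) < Fintype.card V := by exact_mod_cast Fintype.card_pos
  have hw : 0 ≤ fun v => x v + y v := fun v => add_nonneg (hx v) (hy v)
  have hmix := mul_sum_sq_le_of_le_walkMatrix_mulVec hX hY hlam hw
    (fun v => le_add_of_nonneg_right (hy v)) (fun v => le_add_of_nonneg_left (hx v)) hloc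
  have hsq := mul_sum_le_sum_sq hw hθ
  set P := ∑ v, (x v + y v)
  refine (le_div_iff₀ hn).1 (le_of_mul_le_mul_right ?_ hpos)
  calc (κ - 2 * lam) * θ * P = (κ - 2 * lam) * (θ * P) := by ring
    _ ≤ (κ - 2 * lam) * ∑ v, (x v + y v) ^ 2 :=
        mul_le_mul_of_nonneg_left hsq (sub_nonneg.2 hκ)
    _ ≤ 2 * P ^ 2 / Fintype.card V := hmix
    _ = 2 * P / Fintype.card V * P := by ring

end Expansion

section Conflicts

variable {S R : Type*} [Fintype I] (X : LabelledGraph V I) (ρ : I → S → R)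

/-- The labels `i` of the edges at `v` whose constraint `ρ i (f v) = ρ (inv i) (f (step i v))` would
be violated if `f` took the value `s` at `v`. -/
def conflicts (f : V → S) (v : V) (s : S) : Finset I :=
  Finset.univ.filter fun i => ρ i s ≠ ρ (X.inv i) (f (X.step i v))

theorem mem_conflicts {f : V → S} {v : V} {s : S} {i : I} :
    i ∈ X.conflicts ρ f v s ↔ ρ i s ≠ ρ (X.inv i) (f (X.step i v)) := by
  simp [conflicts]

variable [DecidableEq V]

theorem conflicts_update (hX : ∀ i v, X.step i v ≠ v) (f : V → S) (v : V)
    (s t : S) : X.conflicts ρ (Function.update f v t) v s = X.conflicts ρ f v s := by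
  ext i
  simp only [mem_conflicts, Function.update_of_ne (hX i v)]

variable [Fintype V]

theorem card_filter_step_eq_and_mem_conflicts (f : V → S) (v : V) :
    (Finset.univ.filter fun p : V × I =>
      X.step p.2 p.1 = v ∧ p.2 ∈ X.conflicts ρ f p.1 (f p.1)).card =
      (X.conflicts ρ f v (f v)).card := by
  symm
  refine Finset.card_bij (fun i _ => (X.step i v, X.inv i)) (fun i hi => ?_)
    (fun i _ j _ hij => ?_) fun p hp => ?_
  · rw [mem_conflicts] at hi
    simp [mem_conflicts, X.step_inv, X.inv_inv, hi.symm]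
  · exact (Function.LeftInverse.injective X.inv_inv) (Prod.ext_iff.1 hij).2
  · simp only [Finset.mem_filter, Finset.mem_univ, true_and, mem_conflicts] at hp
    obtain ⟨rfl, hp⟩ := hp
    exact ⟨X.inv p.2, by simp [mem_conflicts, X.step_inv, X.inv_inv, hp.symm],
      by simp [X.step_inv, X.inv_inv]⟩

theorem sum_card_conflicts_eq (hX : ∀ i v, X.step i v ≠ v) (f : V → S) (v₀ : V) :
    ∑ v, (X.conflicts ρ f v (f v)).card = 2 * (X.conflicts ρ f v₀ (f v₀)).card +
      (Finset.univ.filter fun p : V × I => p.1 ≠ v₀ ∧ X.step p.2 p.1 ≠ v₀ ∧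
        p.2 ∈ X.conflicts ρ f p.1 (f p.1)).card := by
  set D : Finset (V × I) := Finset.univ.filter fun p => p.2 ∈ X.conflicts ρ f p.1 (f p.1) with hD
  have hsum : ∑ v, (X.conflicts ρ f v (f v)).card = D.card :=
    (card_filter_snd_mem _).symm
  have hstart : (D.filter fun p => p.1 = v₀).card = (X.conflicts ρ f v₀ (f v₀)).card := by
    symm
    refine Finset.card_bij (fun i _ => (v₀, i)) (fun i hi => by simpa [hD] using hi)
      (fun i _ j _ hij => (Prod.ext_iff.1 hij).2) fun p hp => ?_
    simp only [hD, Finset.mem_filter, Finset.mem_univ, true_and] at hp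
    obtain ⟨hp, rfl⟩ := hp
    exact ⟨p.2, hp, rfl⟩
  have hend : ((D.filter fun p => p.1 ≠ v₀).filter fun p => X.step p.2 p.1 = v₀).card =
      (X.conflicts ρ f v₀ (f v₀)).card := by
    rw [← X.card_filter_step_eq_and_mem_conflicts ρ f v₀, Finset.filter_filter,
      Finset.filter_filter]
    refine congrArg _ (Finset.filter_congr fun p _ => ⟨fun h => ⟨h.2.2, h.1⟩, fun h => ?_⟩)
    exact ⟨h.2, fun h₀ => hX p.2 p.1 (h.1.trans h₀.symm), h.1⟩
  have hrest : ((D.filter fun p => p.1 ≠ v₀).filter fun p => X.step p.2 p.1 ≠ v₀) =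
      Finset.univ.filter fun p : V × I => p.1 ≠ v₀ ∧ X.step p.2 p.1 ≠ v₀ ∧
        p.2 ∈ X.conflicts ρ f p.1 (f p.1) := by
    ext p
    simp only [hD, Finset.mem_filter, Finset.mem_univ, true_and]
    tauto
  rw [hsum, ← Finset.card_filter_add_card_filter_not (s := D) fun p => p.1 = v₀, hstart,
    ← Finset.card_filter_add_card_filter_not (s := D.filter fun p => p.1 ≠ v₀)
      fun p => X.step p.2 p.1 = v₀, hend, hrest]
  ring

theorem sum_card_conflicts_update (hX : ∀ i v, X.step i v ≠ v) (f : V → S)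
    (v₀ : V) (s : S) :
    ∑ v, (X.conflicts ρ (Function.update f v₀ s) v (Function.update f v₀ s v)).card +
        2 * (X.conflicts ρ f v₀ (f v₀)).card =
      ∑ v, (X.conflicts ρ f v (f v)).card + 2 * (X.conflicts ρ f v₀ s).card := by
  rw [X.sum_card_conflicts_eq ρ hX f v₀, X.sum_card_conflicts_eq ρ hX _ v₀,
    Function.update_self, X.conflicts_update ρ hX]
  have hrest (p : V × I) (h₁ : p.1 ≠ v₀) (h₂ : X.step p.2 p.1 ≠ v₀) :
      p.2 ∈ X.conflicts ρ (Function.update f v₀ s) p.1 (Function.update f v₀ s p.1) ↔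
        p.2 ∈ X.conflicts ρ f p.1 (f p.1) := by
    simp only [mem_conflicts, Function.update_of_ne h₁, Function.update_of_ne h₂]
  rw [Finset.filter_congr fun p _ => and_congr_right fun h₁ => and_congr_right (hrest p h₁)]
  ring

end Conflicts

end LabelledGraph

theorem exists_penalized_min {V S : Type*} [Fintype V] [DecidableEq V] [DecidableEq S]
    (E : (V → S) → ℕ) (C : Set S) (c : ℕ) {f : V → S} (hf : ∀ v, f v ∈ C) :
    ∃ F : V → S, (∀ v, F v ∈ C) ∧ E F + c * hammingDist f F ≤ E f ∧
      ∀ v, ∀ s ∈ C, E F ≤ E (Function.update F v s) + c := by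
  obtain ⟨F, hFC, hmin⟩ := exists_minimalFor_of_wellFoundedLT (fun F : V → S => ∀ v, F v ∈ C)
    (fun F => E F + c * hammingDist f F) ⟨f, hf⟩
  have hle {F' : V → S} (h : ∀ v, F' v ∈ C) :
      E F + c * hammingDist f F ≤ E F' + c * hammingDist f F' :=
    (le_total _ _).elim id fun h' => hmin h h'
  refine ⟨F, hFC, by simpa using hle hf, fun v s hs => ?_⟩
  have hdist : hammingDist f (Function.update F v s) ≤ hammingDist f F + 1 := by
    refine (hammingDist_triangle f F _).trans (Nat.add_le_add_left ?_ _)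
    rw [← Finset.card_singleton v]
    refine Finset.card_le_card fun w hw => ?_
    by_contra hwv
    simp [Function.update_of_ne (Finset.notMem_singleton.1 hwv)] at hw
  have hupdate : ∀ w, Function.update F v s w ∈ C := by
    intro w
    rcases eq_or_ne w v with rfl | h
    · rwa [Function.update_self]
    · rw [Function.update_of_ne h]
      exact hFC w
  have := Nat.mul_le_mul_left c hdist
  linarith [hle hupdate]

section CayleyGraphs

variable {G : Type*} [Group G]

/-- The left Cayley graph `Cay(A, G)`, with edges `{g, ag}`. -/
def leftCayley {A : Finset G} (hA : ∀ a ∈ A, a⁻¹ ∈ A) : LabelledGraph G ↥A where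
  step a := Equiv.mulLeft (a : G)
  inv a := ⟨(a : G)⁻¹, hA _ a.2⟩
  inv_inv a := Subtype.ext (inv_inv (a : G))
  step_inv _ := Equiv.ext fun _ => rfl

/-- The right Cayley graph `Cay(G, B)`, with edges `{g, gb}`. -/
def rightCayley {B : Finset G} (hB : ∀ b ∈ B, b⁻¹ ∈ B) : LabelledGraph G ↥B where
  step b := Equiv.mulRight (b : G)
  inv b := ⟨(b : G)⁻¹, hB _ b.2⟩
  inv_inv b := Subtype.ext (inv_inv (b : G))
  step_inv _ := Equiv.ext fun _ => rfl

theorem leftCayley_step_ne {A : Finset G} (hA : ∀ a ∈ A, a⁻¹ ∈ A) (h1 : (1 : G) ∉ A) (a : ↥A)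
    (g : G) : (leftCayley hA).step a g ≠ g :=
  fun h => h1 (mul_eq_right.1 h ▸ a.2)

theorem rightCayley_step_ne {B : Finset G} (hB : ∀ b ∈ B, b⁻¹ ∈ B) (h1 : (1 : G) ∉ B) (b : ↥B)
    (g : G) : (rightCayley hB).step b g ≠ g :=
  fun h => h1 (mul_eq_left.1 h ▸ b.2)

variable [Fintype G] {lam : ℝ}

theorem leftCayley_walkMatrix_mulVec {A : Finset G} (hA : ∀ a ∈ A, a⁻¹ ∈ A) (u : G → ℝ) (g : G) :
    (leftCayley hA).walkMatrix.mulVec u g = (∑ a : ↥A, u (a * g)) / A.card := by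
  rw [LabelledGraph.walkMatrix_mulVec_apply, Fintype.card_coe]
  rfl

theorem rightCayley_walkMatrix_mulVec {B : Finset G} (hB : ∀ b ∈ B, b⁻¹ ∈ B) (u : G → ℝ) (g : G) :
    (rightCayley hB).walkMatrix.mulVec u g = (∑ b : ↥B, u (g * b)) / B.card := by
  rw [LabelledGraph.walkMatrix_mulVec_apply, Fintype.card_coe]
  rfl

theorem IsLeftCayleyExpander.isExpander {A : Finset G} (hA : ∀ a ∈ A, a⁻¹ ∈ A)
    (h : IsLeftCayleyExpander A lam) : (leftCayley hA).IsExpander lam := by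
  intro μ f hf hsum hev
  refine h μ f hf hsum fun g => ?_
  rw [← Finset.sum_coe_sort, ← leftCayley_walkMatrix_mulVec hA, hev, Pi.smul_apply, smul_eq_mul]

theorem IsRightCayleyExpander.isExpander {B : Finset G} (hB : ∀ b ∈ B, b⁻¹ ∈ B)
    (h : IsRightCayleyExpander B lam) : (rightCayley hB).IsExpander lam := by
  intro μ f hf hsum hev
  refine h μ f hf hsum fun g => ?_
  rw [← Finset.sum_coe_sort, ← rightCayley_walkMatrix_mulVec hB, hev, Pi.smul_apply, smul_eq_mul]

end CayleyGraphs

section DoubleCayley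

variable {G : Type*} [Group G] {A B : Finset G} (hA : ∀ a ∈ A, a⁻¹ ∈ A) (hB : ∀ b ∈ B, b⁻¹ ∈ B)
  {𝔽 : Type*}

/-- The labels `a` of the edges `{g, ag}` whose constraint would be violated if the word `f` took
the value `m` at `g`. -/
def rowConflicts (f : G → ↥A → ↥B → 𝔽) (g : G) (m : ↥A → ↥B → 𝔽) : Finset ↥A :=
  (leftCayley hA).conflicts (fun a m => m a) f g m

/-- The labels `b` of the edges `{g, gb}` whose constraint would be violated if the word `f` took
the value `m` at `g`. -/
def colConflicts (f : G → ↥A → ↥B → 𝔽) (g : G) (m : ↥A → ↥B → 𝔽) : Finset ↥B :=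
  (rightCayley hB).conflicts (fun b m a => m a b) f g m

theorem mem_rowConflicts {f : G → ↥A → ↥B → 𝔽} {g : G} {m : ↥A → ↥B → 𝔽} {a : ↥A} :
    a ∈ rowConflicts hA f g m ↔ m a ≠ f (a * g) ⟨(a : G)⁻¹, hA _ a.2⟩ :=
  (leftCayley hA).mem_conflicts _

theorem mem_colConflicts {f : G → ↥A → ↥B → 𝔽} {g : G} {m : ↥A → ↥B → 𝔽} {b : ↥B} :
    b ∈ colConflicts hB f g m ↔
      (fun a => m a b) ≠ fun a => f (g * b) a ⟨(b : G)⁻¹, hB _ b.2⟩ :=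
  (rightCayley hB).mem_conflicts _

/-- The contribution of the vertex `g` to the energy of a word when `m` is its value there. The
weights `|B|` and `|A|` make both edge directions count equally in agreement testability. -/
def localEnergy (f : G → ↥A → ↥B → 𝔽) (g : G) (m : ↥A → ↥B → 𝔽) : ℕ :=
  B.card * (rowConflicts hA f g m).card + A.card * (colConflicts hB f g m).card

theorem min_card_le_localEnergy {f : G → ↥A → ↥B → 𝔽} {g : G} {m : ↥A → ↥B → 𝔽}
    (h : localEnergy hA hB f g m ≠ 0) : min A.card B.card ≤ localEnergy hA hB f g m := by
  unfold localEnergy at h ⊢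
  rcases Nat.eq_zero_or_pos (rowConflicts hA f g m).card with hrow | hrow
  · have hcol : 0 < (colConflicts hB f g m).card := Nat.pos_of_ne_zero fun hcol => h (by simp [*])
    exact (min_le_left _ _).trans (le_add_left (Nat.le_mul_of_pos_right _ hcol))
  · exact (min_le_right _ _).trans (le_add_right (Nat.le_mul_of_pos_right _ hrow))

theorem card_disagreement_le (f : G → ↥A → ↥B → 𝔽) (g : G) :
    (Finset.univ.filter fun p : ↥A × ↥B => f (g * p.2) p.1 ⟨(p.2 : G)⁻¹, hB _ p.2.2⟩ ≠
      f (p.1 * g) ⟨(p.1 : G)⁻¹, hA _ p.1.2⟩ p.2).card ≤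
      ∑ b : ↥B, (rowConflicts hA f (g * b) (f (g * b))).card +
        ∑ a : ↥A, (colConflicts hB f (a * g) (f (a * g))).card := by
  rw [← card_filter_fst_mem, ← card_filter_snd_mem]
  refine (Finset.card_le_card fun p hp => ?_).trans (Finset.card_union_le _ _)
  simp only [Finset.mem_union, Finset.mem_filter, Finset.mem_univ, true_and, mem_rowConflicts,
    mem_colConflicts] at hp ⊢
  -- Both entries are compared with the one at the opposite corner `p.1 * g * p.2` of the square.
  by_contra! h
  exact hp ((congrFun h.1 _).trans ((mul_assoc (p.1 : G) g p.2) ▸ (congrFun h.2 _).symm))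

theorem exists_mul_localEnergy_le [Field 𝔽] {CA : Submodule 𝔽 (↥A → 𝔽)}
    {CB : Submodule 𝔽 (↥B → 𝔽)} {ε : ℝ} (hagr : AgreementTestable CA CB ε) {f : G → ↥A → ↥B → 𝔽}
    (hf : ∀ g, f g ∈ tensorCode CA CB) (hA0 : A.card ≠ 0) (hB0 : B.card ≠ 0) (g : G) :
    ∃ m ∈ tensorCode CA CB, ε * localEnergy hA hB f g m ≤
      2 * (∑ b : ↥B, ((rowConflicts hA f (g * b) (f (g * b))).card : ℝ) +
        ∑ a : ↥A, ((colConflicts hB f (a * g) (f (a * g))).card : ℝ)) := by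
  obtain ⟨m, hm, hle⟩ := hagr (fun a b => f (g * b) a ⟨(b : G)⁻¹, hB _ b.2⟩)
    (fun a b => f (a * g) ⟨(a : G)⁻¹, hA _ a.2⟩ b) (fun b => (hf _).2 _) fun a => (hf _).1 _
  have hrow : (Finset.univ.filter fun a : ↥A => (fun b => f (a * g) ⟨(a : G)⁻¹, hA _ a.2⟩ b) ≠
      m a) = rowConflicts hA f g m := by
    ext a
    simp only [Finset.mem_filter, Finset.mem_univ, true_and, mem_rowConflicts]
    exact ne_comm
  have hcol : (Finset.univ.filter fun b : ↥B => (fun a => f (g * b) a ⟨(b : G)⁻¹, hB _ b.2⟩) ≠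
      fun a => m a b) = colConflicts hB f g m := by
    ext b
    simp only [Finset.mem_filter, Finset.mem_univ, true_and, mem_colConflicts]
    exact ne_comm
  have hdis := Nat.cast_le (α := ℝ).2 (card_disagreement_le hA hB f g)
  push_cast at hdis
  refine ⟨m, hm, le_trans ?_ (mul_le_mul_of_nonneg_left hdis zero_le_two)⟩
  rw [hrow, hcol, Fintype.card_coe, Fintype.card_coe, le_div_iff₀ (by positivity)] at hle
  calc ε * (localEnergy hA hB f g m : ℝ)
      = 2 * (ε * ((rowConflicts hA f g m).card / (2 * (A.card : ℝ)) +
          (colConflicts hB f g m).card / (2 * (B.card : ℝ))) * (A.card * B.card)) := by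
        simp only [localEnergy, Nat.cast_add, Nat.cast_mul]
        field_simp
    _ ≤ _ := mul_le_mul_of_nonneg_left hle zero_le_two

variable [Fintype G]

/-- The violation energy of a word: the number of violated edge ends, an edge `{g, ag}` weighing
`|B|` and an edge `{g, gb}` weighing `|A|`. -/
def energy (f : G → ↥A → ↥B → 𝔽) : ℕ :=
  ∑ g, localEnergy hA hB f g (f g)

theorem energy_eq (f : G → ↥A → ↥B → 𝔽) :
    energy hA hB f = B.card * ∑ g, (rowConflicts hA f g (f g)).card +
      A.card * ∑ g, (colConflicts hB f g (f g)).card := by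
  simp only [energy, localEnergy, Finset.sum_add_distrib, Finset.mul_sum]

theorem energy_update [DecidableEq G] (hA1 : (1 : G) ∉ A) (hB1 : (1 : G) ∉ B)
    (f : G → ↥A → ↥B → 𝔽) (g : G) (m : ↥A → ↥B → 𝔽) :
    energy hA hB (Function.update f g m) + 2 * localEnergy hA hB f g (f g) =
      energy hA hB f + 2 * localEnergy hA hB f g m := by
  have hrow := (leftCayley hA).sum_card_conflicts_update (fun a (m : ↥A → ↥B → 𝔽) => m a)
    (leftCayley_step_ne hA hA1) f g m
  have hcol := (rightCayley hB).sum_card_conflicts_update (fun b (m : ↥A → ↥B → 𝔽) a => m a b)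
    (rightCayley_step_ne hB hB1) f g m
  simp only [energy_eq, localEnergy, rowConflicts, colConflicts]
  linear_combination B.card * hrow + A.card * hcol

theorem card_rowConflicts_add_card_colConflicts_le [DecidableEq G]
    (htnc : ∀ g : G, ∀ a ∈ A, ∀ b ∈ B, g * a * g⁻¹ ≠ b) (f : G → ↥A → ↥B → 𝔽) (g : G) :
    (rowConflicts hA f g (f g)).card + (colConflicts hB f g (f g)).card ≤
      ((violatedEdges A B hA hB f).filter fun e => g ∈ e).card := by
  set N : Finset G := (rowConflicts hA f g (f g)).image (fun a : ↥A => (a : G) * g) ∪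
    (colConflicts hB f g (f g)).image fun b : ↥B => g * (b : G) with hN
  have hcard : N.card =
      (rowConflicts hA f g (f g)).card + (colConflicts hB f g (f g)).card := by
    rw [hN, Finset.card_union_of_disjoint,
      Finset.card_image_of_injective _ fun a a' h => Subtype.ext (mul_right_cancel h),
      Finset.card_image_of_injective _ fun b b' h => Subtype.ext (mul_left_cancel h)]
    simp only [Finset.disjoint_left, Finset.mem_image, not_exists, not_and]
    rintro _ ⟨a, -, rfl⟩ b - hab
    exact htnc g⁻¹ a a.2 b b.2 (by rw [mul_assoc, inv_inv, ← hab, inv_mul_cancel_left])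
  have hpair : Function.Injective fun x : G => ({g, x} : Finset G) := by
    intro x y hxy
    have hx : x = g ∨ x = y := by simpa using Finset.ext_iff.1 hxy x
    have hy : y = g ∨ y = x := by simpa using Finset.ext_iff.1 hxy y
    exact hx.elim (fun h => hy.elim (fun h' => h.trans h'.symm) Eq.symm) id
  rw [← hcard, ← Finset.card_image_of_injective N hpair]
  refine Finset.card_le_card (Finset.image_subset_iff.2 fun x hx => ?_)
  simp only [Finset.mem_filter, violatedEdges, Finset.mem_univ, true_and, Finset.mem_insert,
    true_or, and_true]
  rcases Finset.mem_union.1 hx with hx | hx <;> obtain ⟨c, hc, rfl⟩ := Finset.mem_image.1 hx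
  · exact Or.inl ⟨g, c, rfl, (mem_rowConflicts hA).1 hc⟩
  · exact Or.inr ⟨g, c, rfl, (mem_colConflicts hB).1 hc⟩

theorem sum_card_rowConflicts_add_card_colConflicts_le [DecidableEq G]
    (htnc : ∀ g : G, ∀ a ∈ A, ∀ b ∈ B, g * a * g⁻¹ ≠ b) (f : G → ↥A → ↥B → 𝔽) :
    ∑ g, ((rowConflicts hA f g (f g)).card + (colConflicts hB f g (f g)).card) ≤
      2 * (violatedEdges A B hA hB f).card := by
  calc ∑ g, ((rowConflicts hA f g (f g)).card + (colConflicts hB f g (f g)).card)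
      ≤ ∑ g, ((violatedEdges A B hA hB f).filter fun e => g ∈ e).card :=
        Finset.sum_le_sum fun g _ => card_rowConflicts_add_card_colConflicts_le hA hB htnc f g
    _ = ∑ e ∈ violatedEdges A B hA hB f, (Finset.univ.filter fun g => g ∈ e).card :=
        Finset.sum_card_bipartiteAbove_eq_sum_card_bipartiteBelow (· ∈ ·)
    _ ≤ (violatedEdges A B hA hB f).card * 2 := by
        refine Finset.sum_le_card_nsmul _ _ 2 fun e he => ?_
        rw [Finset.filter_univ_mem]
        obtain ⟨g, a, rfl, -⟩ | ⟨g, b, rfl, -⟩ := (Finset.mem_filter.1 he).2 <;>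
          exact Finset.card_le_two
    _ = 2 * (violatedEdges A B hA hB f).card := mul_comm ..

theorem energy_le [DecidableEq G]
    (htnc : ∀ g : G, ∀ a ∈ A, ∀ b ∈ B, g * a * g⁻¹ ≠ b) (f : G → ↥A → ↥B → 𝔽) :
    energy hA hB f ≤ 2 * max A.card B.card * (violatedEdges A B hA hB f).card := by
  calc energy hA hB f
      ≤ max A.card B.card *
          ∑ g, ((rowConflicts hA f g (f g)).card + (colConflicts hB f g (f g)).card) := by
        rw [energy_eq, Finset.sum_add_distrib, mul_add]
        gcongr
        · exact le_max_right _ _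
        · exact le_max_left _ _
    _ ≤ max A.card B.card * (2 * (violatedEdges A B hA hB f).card) :=
        Nat.mul_le_mul_left _ (sum_card_rowConflicts_add_card_colConflicts_le hA hB htnc f)
    _ = _ := by ring

variable [Field 𝔽] {CA : Submodule 𝔽 (↥A → 𝔽)} {CB : Submodule 𝔽 (↥B → 𝔽)}

theorem mem_Z0_of_energy_eq_zero {f : G → ↥A → ↥B → 𝔽} (hf : ∀ g, f g ∈ tensorCode CA CB)
    (h : energy hA hB f = 0) : f ∈ Z0 A B CA CB hA hB := by
  refine ⟨hf, fun g a b => ?_⟩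
  have hg : localEnergy hA hB f g (f g) = 0 := Finset.sum_eq_zero_iff.1 h g (Finset.mem_univ g)
  have hA0 : A.card ≠ 0 := Finset.card_ne_zero_of_mem a.2
  have hB0 : B.card ≠ 0 := Finset.card_ne_zero_of_mem b.2
  obtain ⟨hrow, hcol⟩ : rowConflicts hA f g (f g) = ∅ ∧ colConflicts hB f g (f g) = ∅ := by
    simpa [localEnergy, hA0, hB0] using hg
  constructor
  · by_contra hne
    exact Finset.eq_empty_iff_forall_notMem.1 hrow a
      ((mem_rowConflicts hA).2 fun h => hne (congrFun h b))
  · by_contra hne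
    exact Finset.eq_empty_iff_forall_notMem.1 hcol b
      ((mem_colConflicts hB).2 fun h => hne (congrFun h a))

theorem mul_localEnergy_le_of_local_min [DecidableEq G] (hA1 : (1 : G) ∉ A)
    (hB1 : (1 : G) ∉ B) {ε : ℝ} (hε : 0 ≤ ε) (hagr : AgreementTestable CA CB ε)
    {f : G → ↥A → ↥B → 𝔽} (hf : ∀ g, f g ∈ tensorCode CA CB) (hA0 : A.card ≠ 0)
    (hB0 : B.card ≠ 0)
    (hmin : ∀ g, ∀ m ∈ tensorCode CA CB,
      energy hA hB f ≤ energy hA hB (Function.update f g m) + min A.card B.card) (g : G) :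
    ε / 4 * localEnergy hA hB f g (f g) ≤
      ∑ b : ↥B, ((rowConflicts hA f (g * b) (f (g * b))).card : ℝ) +
        ∑ a : ↥A, ((colConflicts hB f (a * g) (f (a * g))).card : ℝ) := by
  obtain ⟨m, hm, hle⟩ := exists_mul_localEnergy_le hA hB hagr hf hA0 hB0 g
  have hlocal : localEnergy hA hB f g (f g) ≤ 2 * localEnergy hA hB f g m := by
    rcases eq_or_ne (localEnergy hA hB f g (f g)) 0 with h0 | h0
    · simp [h0]
    · have := hmin g m hm
      have := energy_update hA hB hA1 hB1 f g m
      have := min_card_le_localEnergy hA hB h0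
      omega
  have hcast : (localEnergy hA hB f g (f g) : ℝ) ≤ 2 * localEnergy hA hB f g m := by
    exact_mod_cast hlocal
  linarith [mul_le_mul_of_nonneg_left hcast hε]

theorem mul_card_le_energy_of_local_min [DecidableEq G] (hA1 : (1 : G) ∉ A) (hB1 : (1 : G) ∉ B)
    {ε lam : ℝ} (hagr : AgreementTestable CA CB ε) (hXA : IsLeftCayleyExpander A lam)
    (hXB : IsRightCayleyExpander B lam) (hlam : 0 ≤ lam) (hε : 8 * lam ≤ ε)
    {f : G → ↥A → ↥B → 𝔽} (hf : ∀ g, f g ∈ tensorCode CA CB)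
    (hmin : ∀ g, ∀ m ∈ tensorCode CA CB,
      energy hA hB f ≤ energy hA hB (Function.update f g m) + min A.card B.card)
    (hpos : energy hA hB f ≠ 0) :
    (ε - 8 * lam) * (min A.card B.card : ℕ) * Fintype.card G ≤ 8 * energy hA hB f := by
  rcases Nat.eq_zero_or_pos (min A.card B.card) with h0 | h0
  · simp [h0]
  obtain ⟨hA0, hB0⟩ : 0 < A.card ∧ 0 < B.card := lt_min_iff.1 h0
  have : Nonempty ↥A := (Finset.card_pos.1 hA0).to_subtype
  have : Nonempty ↥B := (Finset.card_pos.1 hB0).to_subtype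
  set x : G → ℝ := fun g => B.card * (rowConflicts hA f g (f g)).card with hx
  set y : G → ℝ := fun g => A.card * (colConflicts hB f g (f g)).card with hy
  have hxy (g : G) : x g + y g = localEnergy hA hB f g (f g) := by
    simp [hx, hy, localEnergy]
  have hsum : ∑ g, (x g + y g) = energy hA hB f := by
    simp only [hxy, energy, Nat.cast_sum]
  have hwalkx (g : G) : (rightCayley hB).walkMatrix.mulVec x g =
      ∑ b : ↥B, ((rowConflicts hA f (g * b) (f (g * b))).card : ℝ) := by
    rw [rightCayley_walkMatrix_mulVec, ← Finset.mul_sum, mul_div_cancel_left₀ _ (by positivity)]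
  have hwalky (g : G) : (leftCayley hA).walkMatrix.mulVec y g =
      ∑ a : ↥A, ((colConflicts hB f (a * g) (f (a * g))).card : ℝ) := by
    rw [leftCayley_walkMatrix_mulVec, ← Finset.mul_sum, mul_div_cancel_left₀ _ (by positivity)]
  have hmix := LabelledGraph.mul_card_le_sum_of_le_walkMatrix_mulVec (hXA.isExpander hA)
    (hXB.isExpander hB) hlam (κ := ε / 4) (θ := (min A.card B.card : ℕ)) (x := x) (y := y)
    (by linarith) (fun g => by positivity) (fun g => by positivity)
    (fun g hg => by
      rw [hxy] at hg ⊢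
      exact_mod_cast min_card_le_localEnergy hA hB (Nat.cast_ne_zero.1 hg))
    (fun g => by
      rw [hxy, hwalkx, hwalky]
      exact mul_localEnergy_le_of_local_min hA hB hA1 hB1 (by linarith) hagr hf hA0.ne' hB0.ne'
        hmin g)
    (by rw [hsum]; positivity)
  rw [hsum] at hmix
  linarith

theorem exists_mem_Z0_mul_card_ne_le [DecidableEq G] (hA1 : (1 : G) ∉ A) (hB1 : (1 : G) ∉ B)
    (htnc : ∀ g : G, ∀ a ∈ A, ∀ b ∈ B, g * a * g⁻¹ ≠ b) {ε lam : ℝ}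
    (hagr : AgreementTestable CA CB ε) (hXA : IsLeftCayleyExpander A lam)
    (hXB : IsRightCayleyExpander B lam) (hlam : 0 ≤ lam) (hε : 16 * lam ≤ ε) (hε1 : ε ≤ 1)
    {f : G → ↥A → ↥B → 𝔽} (hf : ∀ g, f g ∈ tensorCode CA CB) :
    ∃ m ∈ Z0 A B CA CB hA hB,
      ε * min (A.card : ℝ) B.card * (Finset.univ.filter fun g => f g ≠ m g).card ≤
        32 * max (A.card : ℝ) B.card * (violatedEdges A B hA hB f).card := by
  obtain ⟨F, hF, hFle, hFmin⟩ := exists_penalized_min (energy hA hB)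
    (tensorCode CA CB : Set (↥A → ↥B → 𝔽)) (min A.card B.card) hf
  have hE : (energy hA hB F : ℝ) + min (A.card : ℝ) B.card * hammingDist f F ≤
      2 * max (A.card : ℝ) B.card * (violatedEdges A B hA hB f).card := by
    exact_mod_cast hFle.trans (energy_le hA hB htnc f)
  have hd : 0 ≤ min (A.card : ℝ) B.card * hammingDist f F := by positivity
  rcases eq_or_ne (energy hA hB F) 0 with h0 | h0
  · refine ⟨F, mem_Z0_of_energy_eq_zero hA hB hF h0, ?_⟩
    rw [h0, Nat.cast_zero, zero_add] at hE
    calc ε * min (A.card : ℝ) B.card * hammingDist f F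
        = ε * (min (A.card : ℝ) B.card * hammingDist f F) := mul_assoc ..
      _ ≤ min (A.card : ℝ) B.card * hammingDist f F := mul_le_of_le_one_left hd hε1
      _ ≤ _ := by linarith
  · refine ⟨0, zero_mem _, ?_⟩
    have hlow := mul_card_le_energy_of_local_min hA hB hA1 hB1 hagr hXA hXB hlam (by linarith) hF
      hFmin h0
    push_cast at hlow
    calc ε * min (A.card : ℝ) B.card * (Finset.univ.filter fun g => f g ≠ 0).card
        ≤ 2 * (ε - 8 * lam) * min (A.card : ℝ) B.card * Fintype.card G := by
          have hε8 : 0 ≤ ε - 8 * lam := by linarith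
          gcongr
          · linarith
          · exact Finset.card_le_univ _
      _ ≤ _ := by linarith

theorem mul_card_le_mul_card_support_of_mem_Z0 {ε lam : ℝ}
    (hδ : ∀ c ∈ CA, c ≠ 0 → ε ≤ ((Finset.univ.filter fun a => c a ≠ 0).card : ℝ) / A.card)
    (hXA : IsLeftCayleyExpander A lam) {m : G → ↥A → ↥B → 𝔽} (hm : m ∈ Z0 A B CA CB hA hB)
    (hm0 : m ≠ 0) :
    (ε - lam) * Fintype.card G ≤ (1 - lam) * (Finset.univ.filter fun g => m g ≠ 0).card := by
  obtain ⟨g₀, hg₀⟩ := Function.ne_iff.1 hm0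
  obtain ⟨a₀, -⟩ := Function.ne_iff.1 hg₀
  have : Nonempty ↥A := ⟨a₀⟩
  refine (hXA.isExpander hA).mul_card_le_mul_card_of_internal_degree ⟨g₀, by simpa using hg₀⟩
    fun g hg => ?_
  obtain ⟨a, ha⟩ := Function.ne_iff.1 (Finset.mem_filter.1 hg).2
  obtain ⟨b, hb⟩ := Function.ne_iff.1 ha
  refine (hδ _ ((hm.1 g).2 b) fun h => hb (congrFun h a)).trans ?_
  rw [Fintype.card_coe]
  gcongr with a
  -- A nonzero entry of `m g` in the row `a` is shared with `m (a * g)`.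
  exact fun hne => Finset.mem_filter.2 ⟨Finset.mem_univ _, fun h =>
    hne ((hm.2 g a b).1.trans (congrFun (congrFun h ⟨(a : G)⁻¹, hA _ a.2⟩) b))⟩

end DoubleCayley

section Rate

theorem exists_invariant_surjection_of_commuting_involutions {X : Type*} [Fintype X] {σ τ : X → X}
    (hσ : σ.Involutive) (hτ : τ.Involutive) (hστ : Function.Commute σ τ) :
    ∃ (Q : Finset (Finset X)) (π : X → Q), Function.Surjective π ∧ π ∘ σ = π ∧ π ∘ τ = π ∧
      Fintype.card X ≤ 4 * Q.card := by
  let orbit : X → Finset X := fun x => {x, σ x, τ x, σ (τ x)}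
  have hmem (x : X) : x ∈ orbit x := by simp [orbit]
  have horbσ (x : X) : orbit (σ x) = orbit x := by
    ext y
    simp only [orbit, Finset.mem_insert, Finset.mem_singleton, hσ x, ← hστ x, hσ (τ x)]
    tauto
  have horbτ (x : X) : orbit (τ x) = orbit x := by
    ext y
    simp only [orbit, Finset.mem_insert, Finset.mem_singleton, hτ x]
    tauto
  refine ⟨Finset.univ.image orbit,
    fun x => ⟨orbit x, Finset.mem_image_of_mem _ (Finset.mem_univ x)⟩, fun ⟨O, hO⟩ => ?_,
    funext fun x => Subtype.ext (horbσ x), funext fun x => Subtype.ext (horbτ x), ?_⟩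
  · obtain ⟨x, -, rfl⟩ := Finset.mem_image.1 hO
    exact ⟨x, rfl⟩
  · refine Finset.card_le_mul_card_image _ 4 fun O hO => ?_
    obtain ⟨x, -, rfl⟩ := Finset.mem_image.1 hO
    refine (Finset.card_le_card (t := orbit x) fun y hy => ?_).trans Finset.card_le_four
    exact (Finset.mem_filter.1 hy).2 ▸ hmem y

variable {𝔽 : Type*} [Field 𝔽]

theorem finrank_mul_finrank_le_finrank_tensorCode {A B : Type*} [Finite A] [Finite B]
    (CA : Submodule 𝔽 (A → 𝔽)) (CB : Submodule 𝔽 (B → 𝔽)) :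
    Module.finrank 𝔽 CA * Module.finrank 𝔽 CB ≤ Module.finrank 𝔽 (tensorCode CA CB) := by
  let v := Module.finBasis 𝔽 CA
  let Φ : (Fin (Module.finrank 𝔽 CA) → CB) →ₗ[𝔽] (A → B → 𝔽) :=
    { toFun := fun c a b => ∑ i, (v i : A → 𝔽) a * (c i : B → 𝔽) b
      map_add' := fun c d => by ext; simp [mul_add, Finset.sum_add_distrib]
      map_smul' := fun r c => by ext; simp [Finset.mul_sum, mul_left_comm] }
  have hrow (c a) : Φ c a = ∑ i, (v i : A → 𝔽) a • (c i : B → 𝔽) := by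
    ext b; simp [Φ]
  have hcol (c b) : (fun a => Φ c a b) = ∑ i, (c i : B → 𝔽) b • (v i : A → 𝔽) := by
    ext a; simp [Φ, mul_comm]
  have hΦ : Function.Injective Φ := by
    refine (injective_iff_map_eq_zero Φ).2 fun c hc => ?_
    ext i b
    have hsum : ∑ i, (c i : B → 𝔽) b • v i = 0 := by
      ext1
      simp only [Submodule.coe_sum, Submodule.coe_smul, ← hcol, hc]
      rfl
    exact Fintype.linearIndependent_iff.1 v.linearIndependent _ hsum i
  have hrange : LinearMap.range Φ ≤ tensorCode CA CB := by
    rintro _ ⟨c, rfl⟩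
    refine ⟨fun a => ?_, fun b => ?_⟩
    · rw [hrow]
      exact CB.sum_smul_mem _ fun i _ => (c i).2
    · rw [hcol]
      exact CA.sum_smul_mem _ fun i _ => (v i).2
  calc Module.finrank 𝔽 CA * Module.finrank 𝔽 CB
      = Module.finrank 𝔽 (Fin (Module.finrank 𝔽 CA) → CB) := by simp [Module.finrank_pi_fintype]
    _ = Module.finrank 𝔽 (LinearMap.range Φ) := (LinearMap.finrank_range_of_inj hΦ).symm
    _ ≤ Module.finrank 𝔽 (tensorCode CA CB) := Submodule.finrank_mono hrange

theorem card_le_four_mul_finrank_of_invariant_mem {X M : Type*} [Fintype X] [AddCommGroup M]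
    [Module 𝔽 M] {σ τ : X → X} (hσ : σ.Involutive) (hτ : τ.Involutive) (hστ : Function.Commute σ τ)
    {L : (X → 𝔽) →ₗ[𝔽] M} (hL : Function.Injective L) {W : Submodule 𝔽 M} [FiniteDimensional 𝔽 W]
    (hW : ∀ φ : X → 𝔽, φ ∘ σ = φ → φ ∘ τ = φ → L φ ∈ W) :
    Fintype.card X ≤ 4 * Module.finrank 𝔽 W := by
  obtain ⟨Q, π, hπ, hπσ, hπτ, hcard⟩ :=
    exists_invariant_surjection_of_commuting_involutions hσ hτ hστ
  have hinj : Function.Injective (L ∘ₗ LinearMap.funLeft 𝔽 𝔽 π) :=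
    hL.comp (LinearMap.funLeft_injective_of_surjective 𝔽 𝔽 π hπ)
  have hrange : LinearMap.range (L ∘ₗ LinearMap.funLeft 𝔽 𝔽 π) ≤ W := by
    rintro _ ⟨φ, rfl⟩
    exact hW _ (congrArg (φ ∘ ·) hπσ) (congrArg (φ ∘ ·) hπτ)
  have hfin := Submodule.finrank_mono hrange
  rw [LinearMap.finrank_range_of_inj hinj, Module.finrank_fintype_fun_eq_card,
    Fintype.card_coe] at hfin
  exact hcard.trans (Nat.mul_le_mul_left 4 hfin)

variable {G : Type*} [Group G] [Fintype G] {A B : Finset G}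

theorem card_le_four_mul_finrank_Z0_top (hA : ∀ a ∈ A, a⁻¹ ∈ A) (hB : ∀ b ∈ B, b⁻¹ ∈ B) :
    Fintype.card G * (A.card * B.card) ≤
      4 * Module.finrank 𝔽
        (Z0 A B (⊤ : Submodule 𝔽 (↥A → 𝔽)) (⊤ : Submodule 𝔽 (↥B → 𝔽)) hA hB) := by
  let σ : G × ↥A × ↥B → G × ↥A × ↥B := fun p => (p.2.1 * p.1, ⟨(p.2.1 : G)⁻¹, hA _ p.2.1.2⟩, p.2.2)
  let τ : G × ↥A × ↥B → G × ↥A × ↥B := fun p => (p.1 * p.2.2, p.2.1, ⟨(p.2.2 : G)⁻¹, hB _ p.2.2.2⟩)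
  have hσ : σ.Involutive := fun p => by simp [σ]
  have hτ : τ.Involutive := fun p => by simp [τ]
  have hστ : Function.Commute σ τ := fun p => by simp [σ, τ, mul_assoc]
  let L : (G × ↥A × ↥B → 𝔽) →ₗ[𝔽] (G → ↥A → ↥B → 𝔽) :=
    { toFun := fun φ g a b => φ (g, a, b)
      map_add' := fun _ _ => rfl
      map_smul' := fun _ _ => rfl }
  have hL : Function.Injective L := fun φ ψ h =>
    funext fun p => congrFun (congrFun (congrFun h p.1) p.2.1) p.2.2
  have h := card_le_four_mul_finrank_of_invariant_mem hσ hτ hστ hL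
    (W := Z0 A B ⊤ ⊤ hA hB) fun φ hφσ hφτ => ⟨fun g => by simp [tensorCode], fun g a b =>
      ⟨(congrFun hφσ (g, a, b)).symm, (congrFun hφτ (g, a, b)).symm⟩⟩
  simpa using h

theorem four_mul_card_mul_finrank_le_finrank_Z0 (hA : ∀ a ∈ A, a⁻¹ ∈ A) (hB : ∀ b ∈ B, b⁻¹ ∈ B)
    (CA : Submodule 𝔽 (↥A → 𝔽)) (CB : Submodule 𝔽 (↥B → 𝔽)) :
    4 * (Fintype.card G * (Module.finrank 𝔽 CA * Module.finrank 𝔽 CB)) ≤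
      4 * Module.finrank 𝔽 (Z0 A B CA CB hA hB) + 3 * (Fintype.card G * (A.card * B.card)) := by
  let ι := (tensorCode CA CB).subtype.compLeft G
  have hιinj : Function.Injective ι := fun x y h =>
    funext fun g => Subtype.ext (congrFun h g)
  have hinf : LinearMap.range ι ⊓ Z0 A B ⊤ ⊤ hA hB = Z0 A B CA CB hA hB := by
    refine le_antisymm ?_ fun m hm => ⟨⟨fun g => ⟨m g, hm.1 g⟩, rfl⟩, fun g => ?_, hm.2⟩
    · rintro _ ⟨⟨m, rfl⟩, hm⟩
      exact ⟨fun g => (m g).2, hm.2⟩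
    · exact ⟨fun _ => Submodule.mem_top, fun _ => Submodule.mem_top⟩
  have hdim : Module.finrank 𝔽 (LinearMap.range ι) =
      Fintype.card G * Module.finrank 𝔽 (tensorCode CA CB) := by
    rw [LinearMap.finrank_range_of_inj hιinj]
    simp [Module.finrank_pi_fintype]
  have hamb : Module.finrank 𝔽 (G → ↥A → ↥B → 𝔽) = Fintype.card G * (A.card * B.card) := by
    simp [Module.finrank_pi_fintype]
  have hsup := Submodule.finrank_sup_add_finrank_inf_eq (LinearMap.range ι) (Z0 A B ⊤ ⊤ hA hB)
  have hle := Submodule.finrank_le (LinearMap.range ι ⊔ Z0 A B ⊤ ⊤ hA hB)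
  have htensor := Nat.mul_le_mul_left (Fintype.card G)
    (finrank_mul_finrank_le_finrank_tensorCode CA CB)
  have htop := card_le_four_mul_finrank_Z0_top (𝔽 := 𝔽) hA hB
  rw [hinf, hdim] at hsup
  rw [hamb] at hle
  linarith

end Rate

theorem max_div_div_mul_min {α β : ℝ} (hα : 0 < α) (hβ : 0 < β) :
    max (α / β) (β / α) * min α β = max α β := by
  rcases le_total α β with h | h
  · have : α / β ≤ β / α := ((div_le_one hβ).2 h).trans ((one_le_div hα).2 h)
    rw [max_eq_right this, max_eq_right h, min_eq_left h, div_mul_cancel₀ _ hα.ne']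
  · have : β / α ≤ α / β := ((div_le_one hα).2 h).trans ((one_le_div hβ).2 h)
    rw [max_eq_left this, max_eq_left h, min_eq_right h, div_mul_cancel₀ _ hβ.ne']

theorem soundness_constant_mul_le {α β ε n d V : ℝ} (hα : 0 ≤ α) (hβ : 0 ≤ β) (hε : 0 < ε)
    (hn : 0 < n) (hV : 0 ≤ V) (h : ε * min α β * d ≤ 32 * max α β * V) :
    1 / (max (α / β) (β / α) * (250000 / ε ^ 3 + 4800 * max α β / ε)) * (d / n) ≤
      V / (n * (α + β) / 2) := by
  -- If `α` or `β` vanishes, both quotients, hence the constant, are `0` by convention.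
  rcases hα.eq_or_lt with rfl | hα
  · simpa using by positivity
  rcases hβ.eq_or_lt with rfl | hβ
  · simpa using by positivity
  have hmin : 0 < min α β := lt_min hα hβ
  have hM : 0 < max (α / β) (β / α) := lt_max_of_lt_left (div_pos hα hβ)
  have hMmin := max_div_div_mul_min hα hβ
  have hK : 4800 * max α β ≤ (250000 / ε ^ 3 + 4800 * max α β / ε) * ε := by
    rw [add_mul, div_mul_cancel₀ _ hε.ne']
    exact le_add_of_nonneg_left (by positivity)
  set M := max (α / β) (β / α)
  set K := 250000 / ε ^ 3 + 4800 * max α β / ε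
  have hmean : (α + β) / 2 ≤ max α β := by linarith [le_max_left α β, le_max_right α β]
  rw [div_mul_div_comm, one_mul, div_le_div_iff₀ (by positivity) (by positivity)]
  refine le_of_mul_le_mul_left ?_ (mul_pos hε hmin)
  calc ε * min α β * (d * (n * (α + β) / 2)) = ε * min α β * d * ((α + β) / 2) * n := by ring
    _ ≤ 32 * max α β * V * max α β * n := by gcongr
    _ ≤ V * (M * min α β) * (4800 * max α β) * n := by
        rw [hMmin]
        nlinarith [mul_nonneg (mul_nonneg hV (sq_nonneg (max α β))) hn.le]
    _ ≤ V * (M * min α β) * (K * ε) * n := by gcongr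
    _ = ε * min α β * (V * (M * K * n)) := by ring

theorem sInf_relDist_le {V S : Type*} [Fintype V] [DecidableEq S] {C : Set (V → S)} {f m : V → S}
    (hm : m ∈ C) :
    sInf {r : ℝ | ∃ m ∈ C, r = ((Finset.univ.filter fun v => f v ≠ m v).card : ℝ) /
      Fintype.card V} ≤ ((Finset.univ.filter fun v => f v ≠ m v).card : ℝ) / Fintype.card V := by
  refine csInf_le ⟨0, ?_⟩ ⟨m, hm, rfl⟩
  rintro _ ⟨m', -, rfl⟩
  positivity

end FK6

theorem statement6_general
    {G : Type*} [Group G] [Fintype G] [DecidableEq G] {A B : Finset G}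
    (hA1 : (1 : G) ∉ A) (hB1 : (1 : G) ∉ B)
    (hAinv : ∀ a ∈ A, a⁻¹ ∈ A) (hBinv : ∀ b ∈ B, b⁻¹ ∈ B)
    (htnc : ∀ (g : G), ∀ a ∈ A, ∀ b ∈ B, g * a * g⁻¹ ≠ b)
    {𝔽 : Type*} [Field 𝔽]
    (CA : Submodule 𝔽 (↥A → 𝔽)) (CB : Submodule 𝔽 (↥B → 𝔽))
    {ε : ℝ} (hε0 : 0 < ε) (hε1 : ε ≤ 1)
    (h1a : ∀ c ∈ CA, c ≠ 0 →
      ε ≤ ((Finset.univ.filter fun a : ↥A => c a ≠ 0).card : ℝ) / (A.card : ℝ))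
    (h1c : FK6.AgreementTestable CA CB ε)
    (h2a : FK6.IsLeftCayleyExpander A (ε ^ 2 / 2500))
    (h2b : FK6.IsRightCayleyExpander B (ε ^ 2 / 2500)) :
    (∀ m ∈ FK6.Z0 A B CA CB hAinv hBinv, m ≠ 0 →
      0.9996 * ε ≤ ((Finset.univ.filter fun g : G => m g ≠ 0).card : ℝ) / (Fintype.card G : ℝ)) ∧
    ((Fintype.card G : ℝ) *
        ((Module.finrank 𝔽 ↥CA : ℝ) * (Module.finrank 𝔽 ↥CB : ℝ) -
          3 / 4 * (A.card : ℝ) * (B.card : ℝ)) ≤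
      (Module.finrank 𝔽 ↥(FK6.Z0 A B CA CB hAinv hBinv) : ℝ)) ∧
    (∀ f : G → ↥A → ↥B → 𝔽, (∀ g : G, f g ∈ FK6.tensorCode CA CB) →
      (1 / (max ((A.card : ℝ) / (B.card : ℝ)) ((B.card : ℝ) / (A.card : ℝ)) *
            (250000 / ε ^ 3 + 4800 * max (A.card : ℝ) (B.card : ℝ) / ε))) *
          sInf {r : ℝ | ∃ m ∈ FK6.Z0 A B CA CB hAinv hBinv,
            r = ((Finset.univ.filter fun g : G => f g ≠ m g).card : ℝ) / (Fintype.card G : ℝ)}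
        ≤ ((FK6.violatedEdges A B hAinv hBinv f).card : ℝ) /
            ((Fintype.card G : ℝ) * ((A.card : ℝ) + (B.card : ℝ)) / 2)) := by
  have hG : (0 : ℝ) < Fintype.card G := by exact_mod_cast Fintype.card_pos
  have hεsq : ε ^ 2 ≤ ε := by nlinarith
  refine ⟨fun m hm hm0 => ?_, ?_, fun f hf => ?_⟩
  · have h := FK6.mul_card_le_mul_card_support_of_mem_Z0 hAinv hBinv h1a h2a hm hm0
    rw [le_div_iff₀ hG]
    calc 0.9996 * ε * Fintype.card G ≤ (ε - ε ^ 2 / 2500) * Fintype.card G := by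
          gcongr
          linarith
      _ ≤ (1 - ε ^ 2 / 2500) * (Finset.univ.filter fun g => m g ≠ 0).card := h
      _ ≤ _ := mul_le_of_le_one_left (Nat.cast_nonneg _) (sub_le_self _ (by positivity))
  · have h := FK6.four_mul_card_mul_finrank_le_finrank_Z0 hAinv hBinv CA CB
    have := Nat.cast_le (α := ℝ).2 h
    push_cast at this
    linarith
  · obtain ⟨m, hm, h⟩ := FK6.exists_mem_Z0_mul_card_ne_le hAinv hBinv hA1 hB1 htnc h1c h2a h2b
      (by positivity) (by linarith) hε1 hf
    refine (mul_le_mul_of_nonneg_left (FK6.sInf_relDist_le hm) (by positivity)).trans ?_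
    exact FK6.soundness_constant_mul_le (Nat.cast_nonneg _) (Nat.cast_nonneg _) hε0 hG
      (Nat.cast_nonneg _) h

/-- the `0`-cocycle code of the double Cayley complex is a good `2`-query LTC. -/
theorem statement6
    (G : Type) [Group G] [Fintype G] [DecidableEq G]
    (A B : Finset G)
    (hA1 : (1 : G) ∉ A) (hB1 : (1 : G) ∉ B)
    (hAinv : ∀ a ∈ A, a⁻¹ ∈ A) (hBinv : ∀ b ∈ B, b⁻¹ ∈ B)
    (hAgen : Subgroup.closure (A : Set G) = ⊤) (hBgen : Subgroup.closure (B : Set G) = ⊤)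
    (htnc : ∀ (g : G), ∀ a ∈ A, ∀ b ∈ B, g * a * g⁻¹ ≠ b)
    (𝔽 : Type) [Field 𝔽] [Fintype 𝔽]
    (CA : Submodule 𝔽 (↥A → 𝔽)) (CB : Submodule 𝔽 (↥B → 𝔽))
    (ε : ℝ) (hε0 : 0 < ε) (hε1 : ε ≤ 1)
    -- (1a)  δ(C_A) ≥ ε
    (h1a : ∀ c ∈ CA, c ≠ 0 →
      ε ≤ ((Finset.univ.filter fun a : ↥A => c a ≠ 0).card : ℝ) / (A.card : ℝ))
    -- (1b)  δ(C_B) ≥ ε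
    (h1b : ∀ c ∈ CB, c ≠ 0 →
      ε ≤ ((Finset.univ.filter fun b : ↥B => c b ≠ 0).card : ℝ) / (B.card : ℝ))
    -- (1c)  C_A ⊗ C_B is ε-agreement testable
    (h1c : FK6.AgreementTestable CA CB ε)
    -- (2)  Cay(A,G) and Cay(G,B) are (ε²/2500)-expanders
    (h2a : FK6.IsLeftCayleyExpander A (ε ^ 2 / 2500))
    (h2b : FK6.IsRightCayleyExpander B (ε ^ 2 / 2500)) :
    -- (i)  δ(Z⁰) ≥ 0.9996·ε
    (∀ m ∈ FK6.Z0 A B CA CB hAinv hBinv, m ≠ 0 →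
      0.9996 * ε ≤ ((Finset.univ.filter fun g : G => m g ≠ 0).card : ℝ) / (Fintype.card G : ℝ)) ∧
    -- (ii)  rate bound
    ((Fintype.card G : ℝ) *
        ((Module.finrank 𝔽 ↥CA : ℝ) * (Module.finrank 𝔽 ↥CB : ℝ) -
          3 / 4 * (A.card : ℝ) * (B.card : ℝ)) ≤
      (Module.finrank 𝔽 ↥(FK6.Z0 A B CA CB hAinv hBinv) : ℝ)) ∧
    -- (iii)  soundness of the natural 2-query tester
    (∀ f : G → ↥A → ↥B → 𝔽, (∀ g : G, f g ∈ FK6.tensorCode CA CB) →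
      (1 / (max ((A.card : ℝ) / (B.card : ℝ)) ((B.card : ℝ) / (A.card : ℝ)) *
            (250000 / ε ^ 3 + 4800 * max (A.card : ℝ) (B.card : ℝ) / ε))) *
          sInf {r : ℝ | ∃ m ∈ FK6.Z0 A B CA CB hAinv hBinv,
            r = ((Finset.univ.filter fun g : G => f g ≠ m g).card : ℝ) / (Fintype.card G : ℝ)}
        ≤ ((FK6.violatedEdges A B hAinv hBinv f).card : ℝ) /
            ((Fintype.card G : ℝ) * ((A.card : ℝ) + (B.card : ℝ)) / 2)) := by
  exact statement6_general hA1 hB1 hAinv hBinv htnc CA CB hε0 hε1 h1a h1c h2a h2b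
end
end

section
/- Let G be a finite group, A, B ⊆ G∖{1} symmetric generating sets with gag^{−1} ≠ b for all a ∈ A, b ∈ B, g ∈ G, let X = Cay(A,G,B) be the double Cayley complex with its natural weight function w, and let λ ≥ 0. Suppose the Cayley graphs Cay(A,G) and Cay(G,B), with their natural weight functions, are λ-expanders. Then: (i) the underlying weighted graph ugr(X,w) (vertex set G with vertex weights 1/|G|; edges {g,ag} of weight 1/(|A||G|) and {g,gb} of weight 1/(|B||G|)) is a λ-expander, and in particular a (λ,1)-skeleton expander; (ii) the weighted no-intersection graph NNI^{1,1,2}(X,w) — whose vertices are the edges of X with the weights above, and which has, for each square s = {g,ag,gb,agb} of X, one edge of weight w(s) = 4/(|A||B||G|) joining each of the two pairs of opposite sides of s — is a (2λ, 4·max{|A|,|B|})-skeleton expander, and consequently so is the related weighted hypergraph NI^{1,1,2}(X,w). -/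
open scoped Classical

noncomputable section

namespace FK9

variable {G : Type*} [Group G] [Fintype G] [DecidableEq G]

/-- The `A`-type edges of the double Cayley complex having both endpoints in `U`. -/
def aEdgesIn (A : Finset G) (U : Finset G) : Finset (Finset G) :=
  Finset.univ.filter fun e => ∃ g : G, ∃ a ∈ A, e = {g, a * g} ∧ g ∈ U ∧ a * g ∈ U

/-- The `B`-type edges of the double Cayley complex having both endpoints in `U`. -/
def bEdgesIn (B : Finset G) (U : Finset G) : Finset (Finset G) :=
  Finset.univ.filter fun e => ∃ g : G, ∃ b ∈ B, e = {g, g * b} ∧ g ∈ U ∧ g * b ∈ U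

/-- The edges of the double Cayley complex `Cay(A, G, B)`. -/
def xEdges (A B : Finset G) : Finset (Finset G) :=
  Finset.univ.filter fun e =>
    (∃ g : G, ∃ a ∈ A, e = {g, a * g}) ∨ ∃ g : G, ∃ b ∈ B, e = {g, g * b}

/-- The squares of the double Cayley complex `Cay(A, G, B)`. -/
def xSquares (A B : Finset G) : Finset (Finset G) :=
  Finset.univ.filter fun s =>
    ∃ g : G, ∃ a ∈ A, ∃ b ∈ B, s = {g, a * g, g * b, a * g * b}

/-- The edges of the no-intersection graph `NNI^{1,1,2}(Cay(A,G,B))`: for each square,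
one edge joining each of the two pairs of opposite sides. -/
def nniEdges (A B : Finset G) : Finset (Finset (Finset G)) :=
  Finset.univ.filter fun pr =>
    ∃ g : G, ∃ a ∈ A, ∃ b ∈ B,
      pr = {({g, a * g} : Finset G), ({g * b, a * g * b} : Finset G)} ∨
      pr = {({g, g * b} : Finset G), ({a * g, a * g * b} : Finset G)}

/-- The natural weight of an edge of the double Cayley complex. -/
def edgeWeight (A B : Finset G) (e : Finset G) : ℝ :=
  if ∃ g : G, ∃ a ∈ A, e = {g, a * g} then 1 / ((A.card : ℝ) * (Fintype.card G : ℝ))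
  else 1 / ((B.card : ℝ) * (Fintype.card G : ℝ))

/-- The left Cayley graph `Cay(A, G)`, with its natural weight function, is a
`λ`-expander. -/
def IsLeftCayleyExpander (A : Finset G) (lam : ℝ) : Prop :=
  ∀ (μ : ℝ) (f : G → ℝ), f ≠ 0 → (∑ g : G, f g) = 0 →
    (∀ g : G, (∑ a ∈ A, f (a * g)) / (A.card : ℝ) = μ * f g) → μ ≤ lam

/-- The right Cayley graph `Cay(G, B)`, with its natural weight function, is a
`λ`-expander. -/
def IsRightCayleyExpander (B : Finset G) (lam : ℝ) : Prop :=
  ∀ (μ : ℝ) (f : G → ℝ), f ≠ 0 → (∑ g : G, f g) = 0 →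
    (∀ g : G, (∑ b ∈ B, f (g * b)) / (B.card : ℝ) = μ * f g) → μ ≤ lam

end FK9

/-! A self-adjoint operator fixing the constants, whose other eigenvalues are at most `λ`, has
Rayleigh quotient at most `λ` on mean-zero functions. This bound passes to the average of two such
operators, and evaluated at the indicator function of `P` it is the expander mixing bound on the
number of edges inside `P`.

`Cay(A, G)` and `Cay(G, B)` are the Schreier graphs of two commuting actions on `G`, and the bound
on pairs of opposite sides is symmetric in the two. To count the pairs of opposite `S`-sides inside
a set `U` of edges, let `P s` be the set of `v` with `{v, s • v} ∈ U`. Such a pair is a `T`-edge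
inside `P s`, seen once from `s` and once from `s⁻¹`, so that the mixing bound for `T` applies to
each `P s`. Every `S`-edge of `U` is counted twice, whence `∑ |P s| ≤ 2 |U ∩ S-edges|`, and the
quadratic terms are controlled by `∑ |P s| ^ 2 ≤ (∑ |P s|) ^ 2`.
-/

open scoped Finset RealInnerProductSpace

section SymmetricOperator

variable {E : Type*} [NormedAddCommGroup E] [InnerProductSpace ℝ E] [FiniteDimensional ℝ E]
  {T : E →ₗ[ℝ] E} {a : E} {c lam : ℝ}

lemma inner_map_self_le_of_forall_eigenvalue_le (hT : T.IsSymmetric)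
    (h : ∀ (μ : ℝ) (x : E), x ≠ 0 → T x = μ • x → μ ≤ lam) (x : E) :
    ⟪x, T x⟫ ≤ lam * ‖x‖ ^ 2 := by
  let b := hT.eigenvectorBasis rfl
  have hb (i) : T (b i) = hT.eigenvalues rfl i • b i := hT.apply_eigenvectorBasis rfl i
  calc ⟪x, T x⟫ = ∑ i, hT.eigenvalues rfl i * ⟪b i, x⟫ ^ 2 := by
        rw [← b.sum_inner_mul_inner x (T x)]
        refine Finset.sum_congr rfl fun i _ => ?_
        rw [← hT (b i) x, hb, real_inner_smul_left, real_inner_comm]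
        ring
    _ ≤ ∑ i, lam * ⟪b i, x⟫ ^ 2 := by
        gcongr with i
        exact h _ (b i) (b.orthonormal.ne_zero i) (hb i)
    _ = lam * ‖x‖ ^ 2 := by rw [← Finset.mul_sum, b.sum_sq_inner_right]

lemma inner_map_self_le_of_inner_eq_zero (hT : T.IsSymmetric) (ha : T a = c • a)
    (h : ∀ (μ : ℝ) (x : E), x ≠ 0 → ⟪a, x⟫ = 0 → T x = μ • x → μ ≤ lam)
    {x : E} (hx : ⟪a, x⟫ = 0) :
    ⟪x, T x⟫ ≤ lam * ‖x‖ ^ 2 := by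
  have invariant : ∀ y ∈ (ℝ ∙ a)ᗮ, T y ∈ (ℝ ∙ a)ᗮ := by
    simp only [Submodule.mem_orthogonal_singleton_iff_inner_right]
    intro y hy
    rw [← hT, ha, real_inner_smul_left, hy, mul_zero]
  refine inner_map_self_le_of_forall_eigenvalue_le (hT.restrict_invariant invariant)
    (fun μ y hy hTy => ?_) ⟨x, Submodule.mem_orthogonal_singleton_iff_inner_right.2 hx⟩
  exact h μ y (by simpa using hy) (Submodule.mem_orthogonal_singleton_iff_inner_right.1 y.2)
    (congrArg Subtype.val hTy)

lemma inner_map_self_le_add_sq_div (hT : T.IsSymmetric) (ha : T a = c • a) (hlam : 0 ≤ lam)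
    (h : ∀ (μ : ℝ) (x : E), x ≠ 0 → ⟪a, x⟫ = 0 → T x = μ • x → μ ≤ lam) (x : E) :
    ⟪x, T x⟫ ≤ lam * ‖x‖ ^ 2 + c * (⟪a, x⟫ ^ 2 / ‖a‖ ^ 2) := by
  rcases eq_or_ne a 0 with rfl | ha0
  · simpa using inner_map_self_le_of_inner_eq_zero hT ha h (inner_zero_left x)
  set r := ⟪a, x⟫ / ‖a‖ ^ 2 with hr
  obtain ⟨y, hy⟩ : ∃ y, x = r • a + y := ⟨x - r • a, by simp⟩
  have hay : ⟪a, y⟫ = 0 := by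
    rw [eq_sub_of_add_eq' hy.symm, inner_sub_right, real_inner_smul_right,
      real_inner_self_eq_norm_sq, hr, div_mul_cancel₀ _ (by simpa using ha0), sub_self]
  have haTy : ⟪a, T y⟫ = 0 := by rw [← hT, ha, real_inner_smul_left, hay, mul_zero]
  have hform : ⟪x, T x⟫ = c * (r ^ 2 * ‖a‖ ^ 2) + ⟪y, T y⟫ := by
    simp only [hy, map_add, map_smul, ha, inner_add_left, inner_add_right, real_inner_smul_left,
      real_inner_smul_right, real_inner_self_eq_norm_sq, haTy, real_inner_comm a y, hay]
    ring
  have hnorm : ‖x‖ ^ 2 = r ^ 2 * ‖a‖ ^ 2 + ‖y‖ ^ 2 := by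
    rw [hy, norm_add_sq_real, norm_smul, real_inner_smul_left, hay, mul_pow, Real.norm_eq_abs,
      sq_abs]
    ring
  have hproj : ⟪a, x⟫ ^ 2 / ‖a‖ ^ 2 = r ^ 2 * ‖a‖ ^ 2 := by
    rw [hr]
    field_simp
  rw [hform, hnorm, hproj]
  have hyT := inner_map_self_le_of_inner_eq_zero hT ha h hay
  have : 0 ≤ lam * (r ^ 2 * ‖a‖ ^ 2) := by positivity
  linarith

end SymmetricOperator

namespace Schreier

section Expansion

variable {G V : Type*}

/-- The Schreier graph of the finite set `S ⊆ G` acting on `V` is a `λ`-expander: every eigenvalue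
of its adjacency operator on mean-zero functions is at most `λ`. -/
def IsExpander (V : Type*) [SMul G V] [Fintype V] (S : Finset G) (lam : ℝ) : Prop :=
  ∀ (μ : ℝ) (f : V → ℝ), f ≠ 0 → ∑ v, f v = 0 →
    (∀ v, (∑ s ∈ S, f (s • v)) / (#S : ℝ) = μ * f v) → μ ≤ lam

/-- The weighted adjacency operator of the Schreier graph of `S` acting on `V`, as an operator on
`ℓ²(V)`. It is `0` when `S` is empty. -/
def adjOp (V : Type*) [SMul G V] (S : Finset G) :
    EuclideanSpace ℝ V →ₗ[ℝ] EuclideanSpace ℝ V where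
  toFun f := WithLp.toLp 2 fun v => (∑ s ∈ S, f (s • v)) / (#S : ℝ)
  map_add' f g := by ext v; simp [Finset.sum_add_distrib, add_div]
  map_smul' c f := by ext v; simp [← Finset.mul_sum, mul_div_assoc]

@[simp]
lemma adjOp_apply [SMul G V] (S : Finset G) (f : EuclideanSpace ℝ V) (v : V) :
    adjOp V S f v = (∑ s ∈ S, f (s • v)) / (#S : ℝ) := rfl

/-- The constant function `1` as a vector of `ℓ²(V)`. -/
def ones (V : Type*) : EuclideanSpace ℝ V :=
  WithLp.toLp 2 fun _ => 1

-- The eigenvalue is `1`, or `0` when `S` is empty.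
lemma adjOp_ones [SMul G V] (S : Finset G) :
    adjOp V S (ones V) = ((#S : ℝ) / #S) • ones V := by
  ext v
  simp [ones]

/-- The indicator function of `P` as a vector of `ℓ²(V)`. -/
def indicator [DecidableEq V] (P : Finset V) : EuclideanSpace ℝ V :=
  WithLp.toLp 2 fun v => if v ∈ P then 1 else 0

@[simp]
lemma indicator_apply [DecidableEq V] (P : Finset V) (v : V) :
    indicator P v = if v ∈ P then 1 else 0 := rfl

variable [Fintype V]

lemma inner_ones_left (f : EuclideanSpace ℝ V) : ⟪ones V, f⟫ = ∑ v, f v := by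
  simp [PiLp.inner_apply, ones]

lemma norm_ones_sq : ‖ones V‖ ^ 2 = Fintype.card V := by
  simp [EuclideanSpace.real_norm_sq_eq, ones]

variable [DecidableEq V]

lemma inner_indicator_left (P : Finset V) (f : EuclideanSpace ℝ V) :
    ⟪indicator P, f⟫ = ∑ v ∈ P, f v := by
  simp [PiLp.inner_apply]

lemma norm_indicator_sq (P : Finset V) : ‖indicator P‖ ^ 2 = #P := by
  simp [EuclideanSpace.real_norm_sq_eq, indicator_apply]

variable [SMul G V]

/-- The directed edges `(v, s • v)` of the Schreier graph of `S` with both endpoints in `P`,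
recorded as pairs `(v, s)`. -/
def darts (S : Finset G) (P : Finset V) : Finset (V × G) :=
  {x ∈ P ×ˢ S | x.2 • x.1 ∈ P}

lemma card_mul_inner_adjOp_indicator (S : Finset G) (P : Finset V) :
    #S * ⟪indicator P, adjOp V S (indicator P)⟫ = #(darts S P) := by
  rcases S.eq_empty_or_nonempty with rfl | hS
  · simp [darts]
  have hS0 : (#S : ℝ) ≠ 0 := by simpa using hS.ne_empty
  rw [inner_indicator_left, Finset.mul_sum, darts, Finset.card_filter, Finset.sum_product]
  simp [mul_div_cancel₀ _ hS0]

end Expansion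

section Group

variable {G V : Type*} [Group G] [MulAction G V] [Fintype V] {S : Finset G} {lam : ℝ}

lemma adjOp_isSymmetric (hS : ∀ s ∈ S, s⁻¹ ∈ S) : (adjOp V S).IsSymmetric := by
  intro f g
  simp only [PiLp.inner_apply, adjOp_apply, RCLike.inner_apply, conj_trivial, mul_div_assoc',
    div_mul_eq_mul_div, ← Finset.sum_div, Finset.mul_sum, Finset.sum_mul]
  rw [Finset.sum_comm, Finset.sum_comm (t := S)]
  congr 1
  refine Finset.sum_nbij' (·⁻¹) (·⁻¹) hS hS (by simp) (by simp) fun s _ => ?_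
  rw [← Equiv.sum_comp (MulAction.toPerm s) fun v => g (s⁻¹ • v) * f v]
  simp

namespace IsExpander

lemma eigenvalue_le (h : IsExpander V S lam) (μ : ℝ) (f : EuclideanSpace ℝ V)
    (hf : f ≠ 0) (hmean : ⟪ones V, f⟫ = 0) (hμ : adjOp V S f = μ • f) :
    μ ≤ lam := by
  refine h μ f (by simpa using hf) (by rwa [inner_ones_left] at hmean) fun v => ?_
  simpa using congrArg (· v) hμ

lemma inner_adjOp_le (h : IsExpander V S lam) (hS : ∀ s ∈ S, s⁻¹ ∈ S)
    {f : EuclideanSpace ℝ V} (hmean : ∑ v, f v = 0) :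
    ⟪f, adjOp V S f⟫ ≤ lam * ‖f‖ ^ 2 :=
  inner_map_self_le_of_inner_eq_zero (adjOp_isSymmetric hS) (adjOp_ones S)
    h.eigenvalue_le (by rwa [inner_ones_left])

lemma average_eigenvalue_le {H : Type*} [Group H] [MulAction H V] {T : Finset H}
    (hSexp : IsExpander V S lam) (hTexp : IsExpander V T lam)
    (hS : ∀ s ∈ S, s⁻¹ ∈ S) (hT : ∀ t ∈ T, t⁻¹ ∈ T)
    {μ : ℝ} {f : V → ℝ} (hf : f ≠ 0) (hmean : ∑ v, f v = 0)
    (hμ : ∀ v, ((∑ s ∈ S, f (s • v)) / (#S : ℝ) + (∑ t ∈ T, f (t • v)) / (#T : ℝ)) / 2 = μ * f v) :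
    μ ≤ lam := by
  let x : EuclideanSpace ℝ V := WithLp.toLp 2 f
  have hx : 0 < ‖x‖ ^ 2 := by
    have : x ≠ 0 := by simpa [x] using hf
    positivity
  have hsum : adjOp V S x + adjOp V T x = (2 * μ) • x := by
    ext v
    simp only [PiLp.add_apply, PiLp.smul_apply, adjOp_apply, smul_eq_mul, x]
    linarith [hμ v]
  have hform : ⟪x, adjOp V S x⟫ + ⟪x, adjOp V T x⟫ = 2 * μ * ‖x‖ ^ 2 := by
    rw [← inner_add_right, hsum, real_inner_smul_right, real_inner_self_eq_norm_sq]
  have hSx := hSexp.inner_adjOp_le hS (f := x) hmean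
  have hTx := hTexp.inner_adjOp_le hT (f := x) hmean
  exact le_of_mul_le_mul_right (by linarith) hx

variable [DecidableEq V]

lemma inner_adjOp_indicator_le (h : IsExpander V S lam) (hS : ∀ s ∈ S, s⁻¹ ∈ S)
    (hlam : 0 ≤ lam) (P : Finset V) :
    ⟪indicator P, adjOp V S (indicator P)⟫ ≤ lam * #P + (#P : ℝ) ^ 2 / Fintype.card V := by
  have mixing := inner_map_self_le_add_sq_div (adjOp_isSymmetric hS) (adjOp_ones S) hlam
    h.eigenvalue_le (indicator P)
  have hinner : ⟪ones V, indicator P⟫ = #P := by simp [inner_ones_left]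
  rw [hinner, norm_indicator_sq, norm_ones_sq] at mixing
  refine mixing.trans (add_le_add_right ?_ _)
  exact mul_le_of_le_one_left (by positivity) (div_self_le_one _)

lemma card_darts_le (h : IsExpander V S lam) (hS : ∀ s ∈ S, s⁻¹ ∈ S)
    (hlam : 0 ≤ lam) (P : Finset V) :
    #(darts S P) ≤ #S * (lam * #P + (#P : ℝ) ^ 2 / Fintype.card V) := by
  rw [← card_mul_inner_adjOp_indicator]
  gcongr
  exact h.inner_adjOp_indicator_le hS hlam P

end IsExpander

end Group

section Edges

lemma smul_ne_self {G V : Type*} [Monoid G] [MulAction G V] [IsCancelSMul G V] {S : Finset G}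
    (hS1 : 1 ∉ S) : ∀ s ∈ S, ∀ v : V, s • v ≠ v :=
  fun _ hs _ h => hS1 (IsCancelSMul.eq_one_of_smul h ▸ hs)

variable {G V : Type*} [Group G] [MulAction G V] [DecidableEq V]

/-- The undirected edge of a Schreier graph that leaves `v` along the generator `s`. -/
def edge (s : G) (v : V) : Finset V := {v, s • v}

lemma edge_inv_smul (s : G) (v : V) : edge s⁻¹ (s • v) = edge s v := by
  simp [edge, Finset.pair_comm]

lemma edge_subset {s : G} {v : V} {P : Finset V} : edge s v ⊆ P ↔ v ∈ P ∧ s • v ∈ P := by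
  simp [edge, Finset.insert_subset_iff]

lemma image_edge_inv_image_smul (s : G) (e : Finset V) :
    (e.image (s • ·)).image (edge s⁻¹) = e.image (edge s) := by
  simp only [Finset.image_image, Function.comp_def, edge_inv_smul]

variable [Fintype V]

/-- The edges of the Schreier graph of `S` acting on `V`. -/
def edges (V : Type*) [MulAction G V] [DecidableEq V] [Fintype V] (S : Finset G) :
    Finset (Finset V) :=
  (S ×ˢ Finset.univ).image fun x => edge x.1 x.2

variable {S : Finset G} {lam : ℝ}

lemma mem_edges {e : Finset V} : e ∈ edges V S ↔ ∃ s ∈ S, ∃ v, edge s v = e := by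
  simp [edges]

lemma two_mul_card_edges_le_card_darts (hS : ∀ s ∈ S, s⁻¹ ∈ S)
    (hfix : ∀ s ∈ S, ∀ v : V, s • v ≠ v)
    (P : Finset V) :
    2 * #{e ∈ edges V S | e ⊆ P} ≤ #(darts S P) := by
  have mem_darts (s : G) (v : V) : (v, s) ∈ darts S P ↔ s ∈ S ∧ edge s v ⊆ P := by
    simp only [darts, Finset.mem_filter, Finset.mem_product, edge_subset]
    tauto
  refine (Finset.mul_card_image_le_card_of_maps_to
    (f := fun x : V × G => edge x.2 x.1) ?_ 2 ?_)
  · rintro ⟨v, s⟩ hx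
    obtain ⟨hs, hP⟩ := (mem_darts s v).1 hx
    exact Finset.mem_filter.2 ⟨mem_edges.2 ⟨s, hs, v, rfl⟩, hP⟩
  · intro e he
    obtain ⟨he, hP⟩ := Finset.mem_filter.1 he
    obtain ⟨s, hs, v, rfl⟩ := mem_edges.1 he
    refine Finset.one_lt_card.2 ⟨(v, s), ?_, (s • v, s⁻¹), ?_, ?_⟩
    · simp [mem_darts, hs, hP]
    · simp [mem_darts, hS s hs, edge_inv_smul, hP]
    · simpa using fun h : v = s • v => absurd h.symm (hfix s hs v)

lemma IsExpander.two_mul_card_edges_le (h : IsExpander V S lam) (hS : ∀ s ∈ S, s⁻¹ ∈ S)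
    (hfix : ∀ s ∈ S, ∀ v : V, s • v ≠ v) (hlam : 0 ≤ lam) (P : Finset V) :
    2 * (#{e ∈ edges V S | e ⊆ P} : ℝ) ≤ #S * (lam * #P + (#P : ℝ) ^ 2 / Fintype.card V) :=
  le_trans (mod_cast two_mul_card_edges_le_card_darts hS hfix P) (h.card_darts_le hS hlam P)

lemma IsExpander.card_edges_div_le (h : IsExpander V S lam) (hS : ∀ s ∈ S, s⁻¹ ∈ S)
    (hfix : ∀ s ∈ S, ∀ v : V, s • v ≠ v) (hlam : 0 ≤ lam) (P : Finset V) :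
    (#{e ∈ edges V S | e ⊆ P} : ℝ) / (#S * Fintype.card V) ≤
      (lam * (#P / Fintype.card V) + (#P / Fintype.card V : ℝ) ^ 2) / 2 := by
  have hcount := h.two_mul_card_edges_le hS hfix hlam P
  rcases isEmpty_or_nonempty V with hV | hV
  · simp [Finset.eq_empty_of_isEmpty P]
  · refine div_le_of_le_mul₀ (by positivity) (by positivity) ?_
    field_simp at hcount ⊢
    linarith

lemma sum_card_filter_edge_mem_le [IsCancelSMul G V] (hS1 : 1 ∉ S) (U : Finset (Finset V)) :
    ∑ s ∈ S, #{v : V | edge s v ∈ U} ≤ 2 * #(U ∩ edges V S) := by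
  have hsum : ∑ s ∈ S, #{v : V | edge s v ∈ U} =
      #{x ∈ S ×ˢ (Finset.univ : Finset V) | edge x.1 x.2 ∈ U} := by
    simp only [Finset.card_filter, Finset.sum_product]
  rw [hsum]
  refine Finset.card_le_mul_card_image_of_maps_to (f := fun x : G × V => edge x.1 x.2) ?_ 2 ?_
  · rintro ⟨s, v⟩ hx
    simp only [Finset.mem_filter, Finset.mem_product, Finset.mem_univ, and_true] at hx
    exact Finset.mem_inter.2 ⟨hx.2, mem_edges.2 ⟨s, hx.1, v, rfl⟩⟩
  · intro e he
    obtain ⟨s₀, -, v₀, rfl⟩ := mem_edges.1 (Finset.mem_inter.1 he).2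
    refine le_trans (Finset.card_le_card_of_injOn Prod.snd ?_ ?_)
      (Finset.card_le_two (a := v₀) (b := s₀ • v₀))
    · rintro ⟨s, v⟩ hx
      have hsv : edge s v = edge s₀ v₀ := (Finset.mem_filter.1 hx).2
      exact edge_subset.1 hsv.le |>.1
    · rintro ⟨s, v⟩ hx ⟨s', v'⟩ hx' (rfl : v = v')
      simp only [Finset.coe_filter, Finset.mem_filter, Finset.mem_product,
        Set.mem_ofPred_eq] at hx hx'
      have hmem : s • v ∈ edge s' v := edge_subset.1 (hx.2.trans hx'.2.symm).le |>.2
      rcases Finset.mem_insert.1 hmem with h | h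
      · exact absurd (IsCancelSMul.eq_one_of_smul h ▸ hx.1.1.1) hS1
      · rw [IsCancelSMul.right_cancel _ _ _ (Finset.mem_singleton.1 h)]

end Edges

section Squares

variable {G H V : Type*} [Group G] [Group H] [MulAction G V] [MulAction H V]
  [DecidableEq V]

lemma image_edge_edge (s : G) (t : H) (v : V) :
    (edge t v).image (edge s) = {edge s v, edge s (t • v)} := by
  rw [edge, Finset.image_insert, Finset.image_singleton]

variable [Fintype V] {S : Finset G} {T : Finset H} {lam : ℝ}

/-- The pairs `{{v, s • v}, {t • v, s • t • v}}` of opposite `S`-sides of the squares spanned by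
`s ∈ S` and `t ∈ T`. Such a pair is the image of the `T`-edge `{v, t • v}` under `edge s`. -/
def oppositePairs (V : Type*) [MulAction G V] [MulAction H V] [Fintype V] [DecidableEq V]
    (S : Finset G) (T : Finset H) : Finset (Finset (Finset V)) :=
  (S ×ˢ edges V T).image fun x => x.2.image (edge x.1)

lemma mem_oppositePairs {p : Finset (Finset V)} :
    p ∈ oppositePairs V S T ↔ ∃ s ∈ S, ∃ t ∈ T, ∃ v : V, p = {edge s v, edge s (t • v)} := by
  simp only [oppositePairs, Finset.mem_image, Prod.exists, Finset.mem_product, mem_edges]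
  constructor
  · rintro ⟨s, _, ⟨hs, t, ht, v, rfl⟩, rfl⟩
    exact ⟨s, hs, t, ht, v, image_edge_edge s t v⟩
  · rintro ⟨s, hs, t, ht, v, rfl⟩
    exact ⟨s, edge t v, ⟨hs, t, ht, v, rfl⟩, image_edge_edge s t v⟩

lemma disjoint_edges (hT : ∀ t ∈ T, t⁻¹ ∈ T) (hfix : ∀ s ∈ S, ∀ v : V, s • v ≠ v)
    (hne : ∀ s ∈ S, ∀ t ∈ T, ∀ v : V, s • v ≠ t • v) :
    Disjoint (edges V S) (edges V T) := by
  simp only [Finset.disjoint_left, mem_edges, not_exists, not_and]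
  rintro _ ⟨s, hs, v, rfl⟩ t ht w hw
  obtain ⟨hv, hsv⟩ := edge_subset.1 hw.ge
  simp only [edge, Finset.mem_insert, Finset.mem_singleton] at hv hsv
  have hsv_ne := hfix s hs v
  rcases hv with rfl | rfl
  · exact hsv.elim hsv_ne (hne s hs t ht v)
  · rcases hsv with hsv | hsv
    · exact hne s hs t⁻¹ (hT t ht) (t • w) (by rw [hsv, inv_smul_smul])
    · exact hsv_ne hsv

lemma image_smul_mem_edges [SMulCommClass G H V] (s : G) {e : Finset V} (he : e ∈ edges V T) :
    e.image (s • ·) ∈ edges V T := by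
  obtain ⟨t, ht, v, rfl⟩ := mem_edges.1 he
  exact mem_edges.2 ⟨t, ht, s • v, by simp [edge, Finset.image_insert, smul_comm]⟩

lemma image_smul_ne_of_mem_edges {s : G} (hfix : ∀ v : V, s • v ≠ v)
    (hne : ∀ t ∈ T, ∀ v : V, s • v ≠ t • v) {e : Finset V} (he : e ∈ edges V T) :
    e.image (s • ·) ≠ e := by
  obtain ⟨t, ht, v, rfl⟩ := mem_edges.1 he
  intro h
  have hsv : s • v ∈ edge t v := h ▸ Finset.mem_image_of_mem _ (Finset.mem_insert_self v _)
  rcases Finset.mem_insert.1 hsv with h | h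
  · exact hfix v h
  · exact hne t ht v (Finset.mem_singleton.1 h)

lemma two_mul_card_oppositePairs_le [SMulCommClass G H V] (hS : ∀ s ∈ S, s⁻¹ ∈ S)
    (hfix : ∀ s ∈ S, ∀ v : V, s • v ≠ v) (hne : ∀ s ∈ S, ∀ t ∈ T, ∀ v : V, s • v ≠ t • v)
    (U : Finset (Finset V)) :
    2 * #{p ∈ oppositePairs V S T | p ⊆ U} ≤
      ∑ s ∈ S, #{e ∈ edges V T | e ⊆ ({v | edge s v ∈ U} : Finset V)} := by
  have hsum : ∑ s ∈ S, #{e ∈ edges V T | e ⊆ ({v | edge s v ∈ U} : Finset V)} =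
      #{x ∈ S ×ˢ edges V T | x.2.image (edge x.1) ⊆ U} := by
    simp only [Finset.card_filter, Finset.sum_product, Finset.subset_iff, Finset.mem_filter,
      Finset.mem_univ, true_and, Finset.forall_mem_image]
  rw [hsum]
  refine Finset.mul_card_image_le_card_of_maps_to
    (f := fun x : G × Finset V => x.2.image (edge x.1)) ?_ 2 ?_
  · intro x hx
    obtain ⟨hx, hU⟩ := Finset.mem_filter.1 hx
    exact Finset.mem_filter.2 ⟨Finset.mem_image_of_mem _ hx, hU⟩
  · intro p hp
    obtain ⟨hp, hU⟩ := Finset.mem_filter.1 hp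
    obtain ⟨⟨s, e⟩, hse, rfl⟩ := Finset.mem_image.1 hp
    obtain ⟨hs, he⟩ := Finset.mem_product.1 hse
    refine Finset.one_lt_card.2 ⟨(s, e), ?_, (s⁻¹, e.image (s • ·)), ?_, ?_⟩
    · simp [hs, he, hU]
    · simp [hS s hs, image_smul_mem_edges s he, image_edge_inv_image_smul, hU]
    · have := image_smul_ne_of_mem_edges (hfix s hs) (hne s hs) he
      exact fun h => this (Prod.ext_iff.1 h).2.symm

variable [IsCancelSMul G V] [SMulCommClass G H V]

lemma IsExpander.four_mul_card_oppositePairs_le (h : IsExpander V T lam) (hlam : 0 ≤ lam)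
    (hS : ∀ s ∈ S, s⁻¹ ∈ S) (hT : ∀ t ∈ T, t⁻¹ ∈ T)
    (hS1 : 1 ∉ S) (hTfix : ∀ t ∈ T, ∀ v : V, t • v ≠ v)
    (hne : ∀ s ∈ S, ∀ t ∈ T, ∀ v : V, s • v ≠ t • v) (U : Finset (Finset V)) :
    4 * (#{p ∈ oppositePairs V S T | p ⊆ U} : ℝ) ≤
      #T * (2 * lam * #(U ∩ edges V S) + 4 * (#(U ∩ edges V S) : ℝ) ^ 2 / Fintype.card V) := by
  let P (s : G) : Finset V := {v | edge s v ∈ U}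
  set u : ℝ := (#(U ∩ edges V S) : ℝ)
  have hpairs : 2 * (#{p ∈ oppositePairs V S T | p ⊆ U} : ℝ) ≤
      ∑ s ∈ S, (#{e ∈ edges V T | e ⊆ P s} : ℝ) :=
    mod_cast two_mul_card_oppositePairs_le hS (smul_ne_self hS1) hne U
  have hP : ∑ s ∈ S, (#(P s) : ℝ) ≤ 2 * u := by
    simpa [P, u] using (Nat.cast_le (α := ℝ)).2 (sum_card_filter_edge_mem_le hS1 U)
  have hPsq : ∑ s ∈ S, (#(P s) : ℝ) ^ 2 ≤ (2 * u) ^ 2 :=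
    (Finset.sum_sq_le_sq_sum_of_nonneg fun _ _ => by positivity).trans (by gcongr)
  calc 4 * (#{p ∈ oppositePairs V S T | p ⊆ U} : ℝ)
      ≤ ∑ s ∈ S, 2 * (#{e ∈ edges V T | e ⊆ P s} : ℝ) := by rw [← Finset.mul_sum]; linarith
    _ ≤ ∑ s ∈ S, #T * (lam * #(P s) + (#(P s) : ℝ) ^ 2 / Fintype.card V) :=
        Finset.sum_le_sum fun s _ => h.two_mul_card_edges_le hT hTfix hlam (P s)
    _ = #T * (lam * ∑ s ∈ S, (#(P s) : ℝ) + (∑ s ∈ S, (#(P s) : ℝ) ^ 2) / Fintype.card V) := by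
        rw [← Finset.mul_sum, Finset.sum_add_distrib, ← Finset.mul_sum, ← Finset.sum_div]
    _ ≤ #T * (lam * (2 * u) + (2 * u) ^ 2 / Fintype.card V) := by gcongr
    _ = #T * (2 * lam * u + 4 * u ^ 2 / Fintype.card V) := by ring

lemma IsExpander.card_oppositePairs_mul_le (h : IsExpander V T lam) (hlam : 0 ≤ lam)
    (hS : ∀ s ∈ S, s⁻¹ ∈ S) (hT : ∀ t ∈ T, t⁻¹ ∈ T)
    (hS1 : 1 ∉ S) (hTfix : ∀ t ∈ T, ∀ v : V, t • v ≠ v)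
    (hne : ∀ s ∈ S, ∀ t ∈ T, ∀ v : V, s • v ≠ t • v) (U : Finset (Finset V)) :
    #{p ∈ oppositePairs V S T | p ⊆ U} * (4 / (#S * #T * Fintype.card V : ℝ)) ≤
      2 * lam * (#(U ∩ edges V S) / (#S * Fintype.card V)) +
        4 * #S * (#(U ∩ edges V S) / (#S * Fintype.card V) : ℝ) ^ 2 := by
  have hcount := h.four_mul_card_oppositePairs_le hlam hS hT hS1 hTfix hne U
  by_cases h0 : (#S * #T * Fintype.card V : ℝ) = 0
  · rw [h0, div_zero, mul_zero]
    positivity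
  simp only [mul_eq_zero, not_or] at h0
  obtain ⟨⟨hS0, hT0⟩, hV0⟩ := h0
  rw [mul_div_assoc', mul_comm _ (4 : ℝ)]
  refine (div_le_div_of_nonneg_right hcount (by positivity)).trans_eq ?_
  field_simp

lemma IsExpander.card_union_oppositePairs_mul_le [IsCancelSMul H V]
    (hSexp : IsExpander V S lam) (hTexp : IsExpander V T lam) (hlam : 0 ≤ lam)
    (hS : ∀ s ∈ S, s⁻¹ ∈ S) (hT : ∀ t ∈ T, t⁻¹ ∈ T) (hS1 : 1 ∉ S) (hT1 : 1 ∉ T)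
    (hne : ∀ s ∈ S, ∀ t ∈ T, ∀ v : V, s • v ≠ t • v) (U : Finset (Finset V)) :
    #{p ∈ oppositePairs V S T ∪ oppositePairs V T S | p ⊆ U} *
        (4 / (#S * #T * Fintype.card V : ℝ)) ≤
      2 * lam * (#(U ∩ edges V S) / (#S * Fintype.card V) +
          #(U ∩ edges V T) / (#T * Fintype.card V)) +
        4 * max (#S : ℝ) #T * (#(U ∩ edges V S) / (#S * Fintype.card V) +
          #(U ∩ edges V T) / (#T * Fintype.card V)) ^ 2 := by
  have := SMulCommClass.symm G H V
  have hSpairs := hTexp.card_oppositePairs_mul_le hlam hS hT hS1 (smul_ne_self hT1) hne U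
  have hTpairs := hSexp.card_oppositePairs_mul_le hlam hT hS hT1 (smul_ne_self hS1)
    (fun t ht s hs v => (hne s hs t ht v).symm) U
  set x : ℝ := #(U ∩ edges V S) / (#S * Fintype.card V)
  set y : ℝ := #(U ∩ edges V T) / (#T * Fintype.card V)
  have hx : 0 ≤ x := by positivity
  have hy : 0 ≤ y := by positivity
  have hunion : (#{p ∈ oppositePairs V S T ∪ oppositePairs V T S | p ⊆ U} : ℝ) ≤
      #{p ∈ oppositePairs V S T | p ⊆ U} + #{p ∈ oppositePairs V T S | p ⊆ U} := by
    rw [Finset.filter_union]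
    exact mod_cast Finset.card_union_le _ _
  have hsq : #S * x ^ 2 + #T * y ^ 2 ≤ max (#S : ℝ) #T * (x + y) ^ 2 :=
    calc #S * x ^ 2 + #T * y ^ 2 ≤ max (#S : ℝ) #T * x ^ 2 + max (#S : ℝ) #T * y ^ 2 := by
          gcongr
          exacts [le_max_left _ _, le_max_right _ _]
      _ ≤ max (#S : ℝ) #T * (x + y) ^ 2 := by
          rw [← mul_add]
          gcongr
          nlinarith [mul_nonneg hx hy]
  rw [mul_comm (#T : ℝ) #S] at hTpairs
  have hweight := mul_le_mul_of_nonneg_right hunion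
    (by positivity : (0 : ℝ) ≤ 4 / (#S * #T * Fintype.card V))
  linarith

end Squares

end Schreier

lemma card_filter_exists_union_eq_le {α : Type*} [DecidableEq α] (Q : Finset (Finset α))
    (N : Finset (Finset (Finset α))) (U : Finset (Finset α)) :
    #{q ∈ Q | ∃ e₁ ∈ U, ∃ e₂ ∈ U, e₁ ≠ e₂ ∧ {e₁, e₂} ∈ N ∧ e₁ ∪ e₂ = q} ≤ #{p ∈ N | p ⊆ U} := by
  refine Finset.card_le_card_of_surjOn (Finset.sup · id) fun q hq => ?_
  obtain ⟨-, e₁, h₁, e₂, h₂, -, hN, rfl⟩ := Finset.mem_filter.1 hq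
  exact ⟨{e₁, e₂}, by simp [hN, Finset.insert_subset_iff, h₁, h₂], by simp⟩

namespace DoubleCayley

open FK9 Schreier

/-- A subset `B` of `G` as a set of right translations, that is, as a subset of `Gᵐᵒᵖ` acting on
`G`. This makes `Cay(G, B)` a Schreier graph. -/
def opFinset {G : Type*} (B : Finset G) : Finset Gᵐᵒᵖ :=
  B.map MulOpposite.opEquiv.toEmbedding

@[simp]
lemma op_mem_opFinset {G : Type*} {B : Finset G} {b : G} :
    MulOpposite.op b ∈ opFinset B ↔ b ∈ B := by
  simp [opFinset]

@[simp]
lemma card_opFinset {G : Type*} (B : Finset G) : #(opFinset B) = #B :=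
  Finset.card_map _

variable {G : Type*} [Group G]

instance : IsCancelSMul Gᵐᵒᵖ G where
  right_cancel' _ _ _ h := MulOpposite.unop_injective (mul_left_cancel h)

lemma inv_mem_opFinset {B : Finset G} (hB : ∀ b ∈ B, b⁻¹ ∈ B) :
    ∀ t ∈ opFinset B, t⁻¹ ∈ opFinset B :=
  MulOpposite.forall.2 fun b hb => by simpa [← MulOpposite.op_inv] using hB b (by simpa using hb)

lemma smul_ne_op_smul {A B : Finset G}
    (hAB : ∀ (g : G), ∀ a ∈ A, ∀ b ∈ B, g * a * g⁻¹ ≠ b) :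
    ∀ a ∈ A, ∀ t ∈ opFinset B, ∀ g : G, a • g ≠ t • g := by
  refine fun a ha => MulOpposite.forall.2 fun b hb g h => ?_
  refine hAB g⁻¹ a ha b (by simpa using hb) ?_
  rw [inv_inv, mul_assoc, inv_mul_eq_iff_eq_mul]
  exact h

lemma edge_eq_pair_mul_left [DecidableEq G] (a g : G) : edge a g = {g, a * g} := rfl

lemma edge_op_eq_pair_mul_right [DecidableEq G] (b g : G) :
    edge (MulOpposite.op b) g = {g, g * b} := rfl

variable [Fintype G]

lemma isExpander_opFinset {B : Finset G} {lam : ℝ} (h : IsRightCayleyExpander B lam) :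
    IsExpander G (opFinset B) lam :=
  fun μ f hf hmean hμ => h μ f hf hmean (by simpa [opFinset] using hμ)

variable [DecidableEq G] {A B : Finset G}

lemma mem_edges_left {e : Finset G} : e ∈ edges G A ↔ ∃ g : G, ∃ a ∈ A, e = {g, a * g} := by
  simp only [mem_edges, edge_eq_pair_mul_left]
  exact ⟨fun ⟨a, ha, g, h⟩ => ⟨g, a, ha, h.symm⟩, fun ⟨g, a, ha, h⟩ => ⟨a, ha, g, h.symm⟩⟩

lemma mem_edges_opFinset {e : Finset G} :
    e ∈ edges G (opFinset B) ↔ ∃ g : G, ∃ b ∈ B, e = {g, g * b} := by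
  simp only [mem_edges, MulOpposite.exists, op_mem_opFinset, edge_op_eq_pair_mul_right]
  exact ⟨fun ⟨b, hb, g, h⟩ => ⟨g, b, hb, h.symm⟩, fun ⟨g, b, hb, h⟩ => ⟨b, hb, g, h.symm⟩⟩

lemma aEdgesIn_eq (U : Finset G) : aEdgesIn A U = {e ∈ edges G A | e ⊆ U} := by
  ext e
  simp only [aEdgesIn, Finset.mem_filter, Finset.mem_univ, true_and, mem_edges_left]
  constructor
  · rintro ⟨g, a, ha, rfl, hg, hag⟩
    exact ⟨⟨g, a, ha, rfl⟩, by simp [Finset.insert_subset_iff, hg, hag]⟩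
  · rintro ⟨⟨g, a, ha, rfl⟩, hU⟩
    exact ⟨g, a, ha, rfl, by simpa [Finset.insert_subset_iff] using hU⟩

lemma bEdgesIn_eq (U : Finset G) : bEdgesIn B U = {e ∈ edges G (opFinset B) | e ⊆ U} := by
  ext e
  simp only [bEdgesIn, Finset.mem_filter, Finset.mem_univ, true_and, mem_edges_opFinset]
  constructor
  · rintro ⟨g, b, hb, rfl, hg, hgb⟩
    exact ⟨⟨g, b, hb, rfl⟩, by simp [Finset.insert_subset_iff, hg, hgb]⟩
  · rintro ⟨⟨g, b, hb, rfl⟩, hU⟩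
    exact ⟨g, b, hb, rfl, by simpa [Finset.insert_subset_iff] using hU⟩

lemma xEdges_eq : xEdges A B = edges G A ∪ edges G (opFinset B) := by
  ext e
  simp only [xEdges, Finset.mem_filter, Finset.mem_univ, true_and, Finset.mem_union,
    mem_edges_left, mem_edges_opFinset]

lemma nniEdges_eq :
    nniEdges A B = oppositePairs G A (opFinset B) ∪ oppositePairs G (opFinset B) A := by
  ext p
  simp only [nniEdges, Finset.mem_filter, Finset.mem_univ, true_and, Finset.mem_union,
    mem_oppositePairs, MulOpposite.exists, op_mem_opFinset, edge_eq_pair_mul_left,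
    edge_op_eq_pair_mul_right, smul_eq_mul, MulOpposite.smul_eq_mul_unop, MulOpposite.unop_op,
    mul_assoc]
  constructor
  · rintro ⟨g, a, ha, b, hb, h | h⟩
    · exact .inl ⟨a, ha, b, hb, g, h⟩
    · exact .inr ⟨b, hb, a, ha, g, h⟩
  · rintro (⟨a, ha, b, hb, g, h⟩ | ⟨b, hb, a, ha, g, h⟩)
    · exact ⟨g, a, ha, b, hb, .inl h⟩
    · exact ⟨g, a, ha, b, hb, .inr h⟩

lemma sum_edgeWeight_eq (hdisj : Disjoint (edges G A) (edges G (opFinset B)))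
    {U : Finset (Finset G)} (hU : U ⊆ xEdges A B) :
    ∑ e ∈ U, edgeWeight A B e = #(U ∩ edges G A) / (#A * Fintype.card G) +
      #(U ∩ edges G (opFinset B)) / (#B * Fintype.card G) := by
  rw [xEdges_eq] at hU
  have hU_eq : U = U ∩ edges G A ∪ U ∩ edges G (opFinset B) := by
    rw [← Finset.inter_union_distrib_left, Finset.inter_eq_left.2 hU]
  have hU_disj : Disjoint (U ∩ edges G A) (U ∩ edges G (opFinset B)) :=
    hdisj.mono Finset.inter_subset_right Finset.inter_subset_right
  have hleft : ∀ e ∈ U ∩ edges G A, edgeWeight A B e = 1 / (#A * Fintype.card G) := fun e he =>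
    if_pos (mem_edges_left.1 (Finset.mem_inter.1 he).2)
  have hright : ∀ e ∈ U ∩ edges G (opFinset B), edgeWeight A B e = 1 / (#B * Fintype.card G) :=
    fun e he => if_neg fun h => Finset.disjoint_left.1 hdisj (mem_edges_left.2 h)
      (Finset.mem_inter.1 he).2
  conv_lhs => rw [hU_eq, Finset.sum_union hU_disj]
  rw [Finset.sum_congr rfl hleft, Finset.sum_congr rfl hright]
  simp only [Finset.sum_const, nsmul_eq_mul, mul_one_div]

end DoubleCayley

open FK9 Schreier DoubleCayley in
theorem statement9_general {G : Type*} [Group G] [Fintype G] [DecidableEq G]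
    (A B : Finset G)
    (hA1 : (1 : G) ∉ A) (hB1 : (1 : G) ∉ B)
    (hAinv : ∀ a ∈ A, a⁻¹ ∈ A) (hBinv : ∀ b ∈ B, b⁻¹ ∈ B)
    (htnc : ∀ (g : G), ∀ a ∈ A, ∀ b ∈ B, g * a * g⁻¹ ≠ b)
    (lam : ℝ) (hlam : 0 ≤ lam)
    (h2a : IsLeftCayleyExpander A lam) (h2b : IsRightCayleyExpander B lam) :
    (∀ (μ : ℝ) (f : G → ℝ), f ≠ 0 → (∑ g : G, f g) = 0 →
      (∀ g : G, ((∑ a ∈ A, f (a * g)) / (A.card : ℝ) +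
          (∑ b ∈ B, f (g * b)) / (B.card : ℝ)) / 2 = μ * f g) → μ ≤ lam) ∧
    (∀ U : Finset G,
      ((aEdgesIn A U).card : ℝ) / ((A.card : ℝ) * (Fintype.card G : ℝ)) +
          ((bEdgesIn B U).card : ℝ) / ((B.card : ℝ) * (Fintype.card G : ℝ)) ≤
        lam * ((U.card : ℝ) / (Fintype.card G : ℝ)) +
          ((U.card : ℝ) / (Fintype.card G : ℝ)) ^ 2) ∧
    (∀ U : Finset (Finset G), U ⊆ xEdges A B →
      (((nniEdges A B).filter fun pr => pr ⊆ U).card : ℝ) *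
          (4 / ((A.card : ℝ) * (B.card : ℝ) * (Fintype.card G : ℝ))) ≤
        2 * lam * (∑ e ∈ U, edgeWeight A B e) +
          4 * max (A.card : ℝ) (B.card : ℝ) * (∑ e ∈ U, edgeWeight A B e) ^ 2) ∧
    (∀ U : Finset (Finset G), U ⊆ xEdges A B →
      (((xSquares A B).filter fun s => ∃ e₁ ∈ U, ∃ e₂ ∈ U, e₁ ≠ e₂ ∧
            ({e₁, e₂} : Finset (Finset G)) ∈ nniEdges A B ∧ e₁ ∪ e₂ = s).card : ℝ) *
          (4 / ((A.card : ℝ) * (B.card : ℝ) * (Fintype.card G : ℝ))) ≤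
        2 * lam * (∑ e ∈ U, edgeWeight A B e) +
          4 * max (A.card : ℝ) (B.card : ℝ) * (∑ e ∈ U, edgeWeight A B e) ^ 2) := by
  have hB1' : 1 ∉ opFinset B := by rwa [← MulOpposite.op_one, op_mem_opFinset]
  have hBinv' := inv_mem_opFinset hBinv
  have hne := smul_ne_op_smul htnc
  have hA : IsExpander G A lam := h2a
  have hB := isExpander_opFinset h2b
  have hdisj := disjoint_edges hBinv' (smul_ne_self (V := G) hA1) hne
  have hNNI (U : Finset (Finset G)) (hU : U ⊆ xEdges A B) :
      #{p ∈ nniEdges A B | p ⊆ U} * (4 / (#A * #B * Fintype.card G : ℝ)) ≤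
        2 * lam * ∑ e ∈ U, edgeWeight A B e +
          4 * max (#A : ℝ) #B * (∑ e ∈ U, edgeWeight A B e) ^ 2 := by
    rw [sum_edgeWeight_eq hdisj hU, nniEdges_eq, ← card_opFinset B]
    exact hA.card_union_oppositePairs_mul_le hB hlam hAinv hBinv' hA1 hB1' hne U
  refine ⟨fun μ f hf hmean hμ => ?_, fun U => ?_, hNNI, fun U hU => ?_⟩
  · exact hA.average_eigenvalue_le hB hAinv hBinv' hf hmean (by simpa [opFinset] using hμ)
  · have hAU := hA.card_edges_div_le hAinv (smul_ne_self hA1) hlam U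
    have hBU := hB.card_edges_div_le hBinv' (smul_ne_self hB1') hlam U
    rw [card_opFinset] at hBU
    rw [aEdgesIn_eq, bEdgesIn_eq]
    linarith
  · refine le_trans ?_ (hNNI U hU)
    gcongr
    exact card_filter_exists_union_eq_le _ _ U

open FK9 in
/-- expansion of the one-sided Cayley graphs yields expansion and skeleton
expansion of `ugr(Cay(A,G,B))` and of its no-intersection (hyper)graphs. -/
theorem statement9
    (G : Type) [Group G] [Fintype G] [DecidableEq G]
    (A B : Finset G)
    (hA1 : (1 : G) ∉ A) (hB1 : (1 : G) ∉ B)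
    (hAinv : ∀ a ∈ A, a⁻¹ ∈ A) (hBinv : ∀ b ∈ B, b⁻¹ ∈ B)
    (hAgen : Subgroup.closure (A : Set G) = ⊤) (hBgen : Subgroup.closure (B : Set G) = ⊤)
    (htnc : ∀ (g : G), ∀ a ∈ A, ∀ b ∈ B, g * a * g⁻¹ ≠ b)
    (lam : ℝ) (hlam : 0 ≤ lam)
    (h2a : IsLeftCayleyExpander A lam) (h2b : IsRightCayleyExpander B lam) :
    -- (i) ugr(X, w) is a λ-expander ...
    (∀ (μ : ℝ) (f : G → ℝ), f ≠ 0 → (∑ g : G, f g) = 0 →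
      (∀ g : G, ((∑ a ∈ A, f (a * g)) / (A.card : ℝ) +
          (∑ b ∈ B, f (g * b)) / (B.card : ℝ)) / 2 = μ * f g) → μ ≤ lam) ∧
    -- ... and in particular a (λ, 1)-skeleton expander
    (∀ U : Finset G,
      ((aEdgesIn A U).card : ℝ) / ((A.card : ℝ) * (Fintype.card G : ℝ)) +
          ((bEdgesIn B U).card : ℝ) / ((B.card : ℝ) * (Fintype.card G : ℝ)) ≤
        lam * ((U.card : ℝ) / (Fintype.card G : ℝ)) +
          ((U.card : ℝ) / (Fintype.card G : ℝ)) ^ 2) ∧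
    -- (ii) NNI^{1,1,2}(X, w) is a (2λ, 4·max(|A|,|B|))-skeleton expander ...
    (∀ U : Finset (Finset G), U ⊆ xEdges A B →
      (((nniEdges A B).filter fun pr => pr ⊆ U).card : ℝ) *
          (4 / ((A.card : ℝ) * (B.card : ℝ) * (Fintype.card G : ℝ))) ≤
        2 * lam * (∑ e ∈ U, edgeWeight A B e) +
          4 * max (A.card : ℝ) (B.card : ℝ) * (∑ e ∈ U, edgeWeight A B e) ^ 2) ∧
    -- ... and consequently so is NI^{1,1,2}(X, w)
    (∀ U : Finset (Finset G), U ⊆ xEdges A B →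
      (((xSquares A B).filter fun s => ∃ e₁ ∈ U, ∃ e₂ ∈ U, e₁ ≠ e₂ ∧
            ({e₁, e₂} : Finset (Finset G)) ∈ nniEdges A B ∧ e₁ ∪ e₂ = s).card : ℝ) *
          (4 / ((A.card : ℝ) * (B.card : ℝ) * (Fintype.card G : ℝ))) ≤
        2 * lam * (∑ e ∈ U, edgeWeight A B e) +
          4 * max (A.card : ℝ) (B.card : ℝ) * (∑ e ∈ U, edgeWeight A B e) ^ 2) :=
  statement9_general A B hA1 hB1 hAinv hBinv htnc lam hlam h2a h2b
end
end
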